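/- arXiv:2008.13128 — 13 statements merged into one kernel-verified Lean document; each statement's English description precedes it below -/
import Mathlib

section
/- Let A and K be natural numbers with A ≥ 1 and K ≥ 1, let t and b be real numbers with t > 0, and let T and B be integers with T > 0. Then the following are equivalent: (i) for every integer N, clip(⌊(N + b)/t⌋, 0, A) = clip(⌊(N·K + B)/T⌋, 0, A); (ii) for every i ∈ {1, …, A}, ⌈i·t − b⌉ = ⌈(i·T − B)/K⌉. -/
/-!
For fixed positive `k` and `t`, both `i ≤ ⌊(n * k + b) / t⌋` and `⌈(i * t - b) / k⌉ ≤ n` say that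
`i * t ≤ n * k + b`, so the ceiling is the lower adjoint of the floor. Clipping `x` to `[lo, hi]`
forgets everything about `x` except which thresholds `i ∈ (lo, hi]` lie below it. Hence two floors
agree after clipping exactly when their lower adjoints agree on `(lo, hi]`.
-/

open Set

theorem le_min_max_iff_of_mem_Ioc {α : Type*} [LinearOrder α] {i lo hi : α}
    (mem : i ∈ Ioc lo hi) (x : α) : i ≤ min (max x lo) hi ↔ i ≤ x := by
  simp only [le_min_iff, le_max_iff, mem.1.not_ge, mem.2, or_false, and_true]

theorem min_max_eq_min_max_iff {α : Type*} [LinearOrder α] {x y lo hi : α} :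
    min (max x lo) hi = min (max y lo) hi ↔ ∀ i ∈ Ioc lo hi, (i ≤ x ↔ i ≤ y) := by
  refine ⟨fun h i mem ↦ ?_, fun h ↦ eq_of_forall_le_iff fun i ↦ ?_⟩
  · rw [← le_min_max_iff_of_mem_Ioc mem x, h, le_min_max_iff_of_mem_Ioc mem y]
  · by_cases mem : i ∈ Ioc lo hi
    · rw [le_min_max_iff_of_mem_Ioc mem, le_min_max_iff_of_mem_Ioc mem, h i mem]
    · rw [mem_Ioc, not_and_or, not_lt] at mem
      rcases mem with i_le_lo | i_not_le_hi
      · simp only [le_min_iff, le_max_iff, i_le_lo, or_true]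
      · simp only [le_min_iff, i_not_le_hi, and_false]

theorem forall_min_max_eq_iff_eqOn_of_gc {α β : Type*} [LinearOrder α] [PartialOrder β]
    {l l' : α → β} {u u' : β → α} (gc : GaloisConnection l u) (gc' : GaloisConnection l' u')
    {lo hi : α} :
    (∀ n, min (max (u n) lo) hi = min (max (u' n) lo) hi) ↔ EqOn l l' (Ioc lo hi) := by
  simp only [min_max_eq_min_max_iff, ← gc.le_iff_le, ← gc'.le_iff_le]
  exact ⟨fun h i mem ↦ eq_of_forall_ge_iff fun n ↦ h n i mem,
    fun h n i mem ↦ by rw [h mem]⟩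

theorem forall_mem_Ioc_zero_natCast_iff {n : ℕ} {P : ℤ → Prop} :
    (∀ i ∈ Ioc (0 : ℤ) n, P i) ↔ ∀ i : ℕ, 1 ≤ i → i ≤ n → P i := by
  refine ⟨fun h i one_le le_n ↦ h i ⟨by lia, by lia⟩, fun h i ⟨pos, le_n⟩ ↦ ?_⟩
  lift i to ℕ using pos.le
  exact h i (by lia) (by lia)

section FloorRing

variable {R : Type*} [Field R] [LinearOrder R] [IsStrictOrderedRing R] [FloorRing R]

theorem gc_ceil_div_floor_div {k t : R} (hk : 0 < k) (ht : 0 < t) (b : R) :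
    GaloisConnection (fun i : ℤ ↦ ⌈(i * t - b) / k⌉) (fun n : ℤ ↦ ⌊(n * k + b) / t⌋) := by
  intro i n
  rw [Int.ceil_le, div_le_iff₀ hk, sub_le_iff_le_add, Int.le_floor, le_div_iff₀ ht]

theorem stmt_0_general {k t k' t' : R} (hk : 0 < k) (ht : 0 < t) (hk' : 0 < k') (ht' : 0 < t')
    (b b' : R) (lo hi : ℤ) :
    (∀ n : ℤ, min (max ⌊(n * k + b) / t⌋ lo) hi = min (max ⌊(n * k' + b') / t'⌋ lo) hi) ↔
      ∀ i ∈ Ioc lo hi, ⌈(i * t - b) / k⌉ = ⌈(i * t' - b') / k'⌉ :=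
  forall_min_max_eq_iff_eqOn_of_gc
    (gc_ceil_div_floor_div hk ht b) (gc_ceil_div_floor_div hk' ht' b')

end FloorRing

/-- Equivalence between the clipped floor formulation and the
ceiling condition, for `A, K ≥ 1`, `t > 0`, `T > 0`.
`clip x a b = min (max x a) b`. -/
theorem stmt_0 (A K : ℕ) (hA : 1 ≤ A) (hK : 1 ≤ K) (t b : ℝ) (ht : 0 < t)
    (T B : ℤ) (hT : 0 < T) :
    (∀ N : ℤ, min (max (⌊((N : ℝ) + b) / t⌋) 0) (A : ℤ)
        = min (max (⌊((N : ℝ) * (K : ℝ) + (B : ℝ)) / (T : ℝ)⌋) 0) (A : ℤ)) ↔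
    (∀ i : ℕ, 1 ≤ i → i ≤ A →
        ⌈(i : ℝ) * t - b⌉ = ⌈((i : ℝ) * (T : ℝ) - (B : ℝ)) / (K : ℝ)⌉) := by
  simpa only [forall_mem_Ioc_zero_natCast_iff, mul_one, div_one, Int.cast_natCast] using
    stmt_0_general one_pos ht (Nat.cast_pos.2 hK) (Int.cast_pos.2 hT) b (B : ℝ) 0 A
end

section
/- For every natural number n ≥ 1 there exists a natural number K ≥ 1 that is n-admissible. -/
/-!
Increasing `b` slightly moves every `i * t - b` off the integers without changing its ceiling.
Finitely many ceilings are then locally constant in `(t, b)`, so they are attained at a rational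
pair. Moving `t` and `b` by integers shifts each ceiling by an integer independent of their
fractional parts, so only `t, b ∈ [0, 1)` matter. There only finitely many ceiling patterns occur,
and a common denominator of one rational pair for each of them is the required `K`.
-/

open Set Filter Topology

variable {ι : Type*}

/-- The tuple of ceilings of the affine forms `a i * t - b`, whose integer slopes `a` are fixed
while `(t, b)` varies. The theorem concerns the slopes `1, …, n`. -/
noncomputable def ceilPattern (a : ι → ℤ) (t b : ℝ) (i : ι) : ℤ :=
  ⌈a i * t - b⌉

lemma ceilPattern_add_intCast (a : ι → ℤ) (t b : ℝ) (m k : ℤ) (i : ι) :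
    ceilPattern a (t + m) (b + k) i = ceilPattern a t b i + (a i * m - k) := by
  rw [ceilPattern, ceilPattern, ← Int.ceil_add_intCast]
  congr 1
  push_cast
  ring

lemma eventually_sub_mem_Ioo_ceil (x : ℝ) :
    ∀ᶠ ε in 𝓝[>] (0 : ℝ), x - ε ∈ Ioo (⌈x⌉ - 1 : ℝ) ⌈x⌉ := by
  have hpos : 0 < x - (⌈x⌉ - 1) := by linarith [Int.ceil_lt_add_one x]
  filter_upwards [Ioo_mem_nhdsGT hpos] with ε ⟨hε_pos, hε_lt⟩
  exact ⟨by linarith, by linarith [Int.le_ceil x]⟩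

lemma exists_rat_ceilPattern_eq [Finite ι] (a : ι → ℤ) (t b : ℝ) :
    ∃ q r : ℚ, ceilPattern a q r = ceilPattern a t b := by
  obtain ⟨ε, hε⟩ :=
    (eventually_all.2 fun i => eventually_sub_mem_Ioo_ceil (a i * t - b)).exists
  have hnhds : ∀ᶠ x : ℝ × ℝ in 𝓝 (t, b + ε), ∀ i,
      a i * x.1 - x.2 ∈ Ioo (ceilPattern a t b i - 1 : ℝ) (ceilPattern a t b i) := by
    refine eventually_all.2 fun i => ?_
    have hcont : ContinuousAt (fun x : ℝ × ℝ => a i * x.1 - x.2) (t, b + ε) := by fun_prop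
    refine hcont.eventually_mem (isOpen_Ioo.mem_nhds ?_)
    rw [← sub_sub]
    exact hε i
  have hdense : DenseRange (Prod.map ((↑) : ℚ → ℝ) ((↑) : ℚ → ℝ)) :=
    Rat.denseRange_cast.prodMap Rat.denseRange_cast
  obtain ⟨_, ⟨⟨q, r⟩, rfl⟩, hx⟩ := hdense.inter_nhds_nonempty hnhds
  exact ⟨q, r, funext fun i => Int.ceil_eq_on_Ioc _ _ (Ioo_subset_Ioc_self (hx i))⟩

lemma finite_image2_ceilPattern_Ico [Finite ι] (a : ι → ℤ) :
    (image2 (ceilPattern a) (Ico 0 1) (Ico 0 1)).Finite := by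
  refine (Finite.pi' fun i => finite_Icc (-|a i| - 1) |a i|).subset ?_
  rintro _ ⟨t, ⟨ht0, ht1⟩, b, ⟨hb0, hb1⟩, rfl⟩ i
  have habs : |(a i : ℝ) * t| ≤ |(a i : ℝ)| := by
    rw [abs_mul, abs_of_nonneg ht0]
    exact mul_le_of_le_one_right (abs_nonneg _) ht1.le
  obtain ⟨hlower, hupper⟩ := abs_le.1 habs
  constructor
  · have hceil : (-|(a i : ℝ)| - 1) ≤ ⌈a i * t - b⌉ := by
      linarith [Int.le_ceil (a i * t - b)]
    exact_mod_cast hceil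
  · refine Int.ceil_le.2 ?_
    push_cast
    linarith

lemma exists_common_denominator [Finite ι] (x : ι → ℚ) :
    ∃ K : ℕ, 0 < K ∧ ∀ i, ∃ T : ℤ, x i = T / K := by
  have := Fintype.ofFinite ι
  have hpos : 0 < ∏ i, (x i).den := Finset.prod_pos fun i _ => (x i).den_pos
  refine ⟨∏ i, (x i).den, hpos, fun i => ?_⟩
  obtain ⟨m, hm⟩ := Finset.dvd_prod_of_mem (fun j => (x j).den) (Finset.mem_univ i)
  rw [hm] at hpos ⊢
  have hm0 : (m : ℚ) ≠ 0 := by exact_mod_cast (Nat.pos_of_mul_pos_left hpos).ne'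
  refine ⟨(x i).num * m, ?_⟩
  push_cast
  rw [mul_div_mul_right _ _ hm0, Rat.num_div_den]

lemma exists_denominator_ceilPattern_Ico [Finite ι] (a : ι → ℤ) :
    ∃ K : ℕ, 0 < K ∧ ∀ t ∈ Ico (0 : ℝ) 1, ∀ b ∈ Ico (0 : ℝ) 1, ∃ T B : ℤ,
      ceilPattern a (T / K) (B / K) = ceilPattern a t b := by
  let patterns := image2 (ceilPattern a) (Ico 0 1) (Ico 0 1)
  have : Finite patterns := finite_image2_ceilPattern_Ico a
  have hrat : ∀ p : patterns, ∃ q r : ℚ, ceilPattern a q r = p := by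
    rintro ⟨_, t, -, b, -, rfl⟩
    exact exists_rat_ceilPattern_eq a t b
  choose q r hqr using hrat
  obtain ⟨K, hK, hdenom⟩ := exists_common_denominator (Sum.elim q r)
  refine ⟨K, hK, fun t ht b hb => ?_⟩
  let p : patterns := ⟨ceilPattern a t b, mem_image2_of_mem ht hb⟩
  obtain ⟨T, hT : q p = T / K⟩ := hdenom (.inl p)
  obtain ⟨B, hB : r p = B / K⟩ := hdenom (.inr p)
  refine ⟨T, B, ?_⟩
  simpa [hT, hB] using hqr p

lemma exists_denominator_ceilPattern [Finite ι] (a : ι → ℤ) :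
    ∃ K : ℕ, 0 < K ∧ ∀ t b : ℝ, ∃ T B : ℤ,
      ceilPattern a (T / K) (B / K) = ceilPattern a t b := by
  obtain ⟨K, hK, hIco⟩ := exists_denominator_ceilPattern_Ico a
  refine ⟨K, hK, fun t b => ?_⟩
  obtain ⟨T, B, hTB⟩ := hIco (Int.fract t) ⟨Int.fract_nonneg t, Int.fract_lt_one t⟩
    (Int.fract b) ⟨Int.fract_nonneg b, Int.fract_lt_one b⟩
  have hshift : ∀ z m : ℤ, ((z + m * K : ℤ) : ℝ) / K = z / K + m := by
    intro z m
    push_cast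
    field_simp
  refine ⟨T + ⌊t⌋ * K, B + ⌊b⌋ * K, funext fun i => ?_⟩
  rw [hshift, hshift, ceilPattern_add_intCast, hTB, ← ceilPattern_add_intCast,
    Int.fract_add_floor, Int.fract_add_floor]

/-- For every `n ≥ 1` there exists an `n`-admissible `K ≥ 1`. -/
theorem stmt_1 (n : ℕ) (hn : 1 ≤ n) :
    ∃ K : ℕ, 1 ≤ K ∧
      ∀ t b : ℝ, ∃ T B : ℤ, ∀ i : ℕ, 1 ≤ i → i ≤ n →
        ⌈(i : ℝ) * t - b⌉ = ⌈((i : ℝ) * (T : ℝ) - (B : ℝ)) / (K : ℝ)⌉ := by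
  obtain ⟨K, hK, hpattern⟩ := exists_denominator_ceilPattern fun i : Finset.Icc 1 n => (i : ℤ)
  refine ⟨K, hK, fun t b => ?_⟩
  obtain ⟨T, B, hTB⟩ := hpattern t b
  refine ⟨T, B, fun i hi hin => ?_⟩
  have hceil := congrFun hTB ⟨i, Finset.mem_Icc.2 ⟨hi, hin⟩⟩
  simp only [ceilPattern, Int.cast_natCast] at hceil
  rw [← hceil, sub_div, mul_div_assoc]
end

section
/- Let n be a natural number with n > 4. Then every natural number K with 2·K > (n − 1)·(n − 3) is n-admissible. Consequently, the least n-admissible K is at most (n − 1)·(n − 3)/2 + 1. -/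
/-- `K` is `n`-admissible: for all real `t, b` there exist integers `T, B` with
`⌈i·t − b⌉ = ⌈(i·T − B)/K⌉` for every `i ∈ {1, …, n}`. -/
def NAdmissible (n K : ℕ) : Prop :=
  ∀ t b : ℝ, ∃ T B : ℤ, ∀ i : ℕ, 1 ≤ i → i ≤ n →
    ⌈(i : ℝ) * t - b⌉ = ⌈((i : ℝ) * (T : ℝ) - (B : ℝ)) / (K : ℝ)⌉

/-!
Put `a i = ⌈i t - b⌉`. An integer `T` works, with a suitable `B`, as soon as `T / K` exceeds every
fraction `r / s = (a (i + s) - a i - 1) / s` and is less than every fraction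
`p / q = (a (j + q) - a j + 1) / q` with positions in `{1, …, n}`. All the former are less than `t`
and all the latter exceed `t`, so such a `T` exists once `1 / K` is less than every gap
`p / q - r / s = (p s - q r) / (q s)`. Hence `q s` has to be bounded in terms of the determinant
`p s - q r`. If `q = s`, then `q` divides the determinant, which suffices. Otherwise:

* if it is `1`, then `(s, r)` and `(q, p)` form a basis of `ℤ²`; expanding the vector between the
  points at `i` and `j` in this basis shows that `q + s ≤ n - 1`;
* if it is `2`, one of the two vectors can often be halved, which reduces to the previous case and
  excludes `{q, s} = {n - 1, n - 2}`, so `q s ≤ (n - 1) (n - 3)`;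
* if it is at least `3`, the trivial bound `q s ≤ (n - 1) (n - 2)` suffices.
-/

theorem exists_int_between_of_add_one_lt {R : Type*} [CommRing R] [LinearOrder R]
    [IsStrictOrderedRing R] [FloorRing R] {L U : Set R} (hL : L.Nonempty) (hU : U.Nonempty)
    (hLU : ∀ l ∈ L, ∀ u ∈ U, l + 1 < u) :
    ∃ T : ℤ, (∀ l ∈ L, l < T) ∧ ∀ u ∈ U, (T : R) < u := by
  obtain ⟨l₀, hl₀⟩ := hL
  obtain ⟨u₀, hu₀⟩ := hU
  obtain ⟨T, hLT, hT_least⟩ := Int.exists_least_of_bdd (P := fun z : ℤ => ∀ l ∈ L, l < z)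
    ⟨⌊l₀⌋, fun z hz => Int.floor_le_iff.2 ((hz l₀ hl₀).trans (lt_add_one _))⟩
    ⟨⌈u₀⌉, fun l hl => by linarith [hLU l hl u₀ hu₀, Int.le_ceil u₀]⟩
  refine ⟨T, hLT, fun u hu => ?_⟩
  obtain ⟨l, hl, hTl⟩ : ∃ l ∈ L, ((T - 1 : ℤ) : R) ≤ l := by
    by_contra! h
    exact absurd (hT_least _ h) (by lia)
  push_cast at hTl
  linarith [hLU l hl u hu]

theorem exists_ceil_sub_div_eq {𝕜 ι : Type*} [Field 𝕜] [LinearOrder 𝕜] [IsStrictOrderedRing 𝕜]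
    [FloorRing 𝕜] (S : Finset ι) (u a : ι → ℤ) {K : ℤ}
    (h : ∀ x ∈ S, ∀ y ∈ S, u x - u y < K * (a x - a y + 1)) :
    ∃ B : ℤ, ∀ x ∈ S, ⌈((u x : 𝕜) - B) / K⌉ = a x := by
  obtain rfl | hS := S.eq_empty_or_nonempty
  · exact ⟨0, by simp⟩
  obtain ⟨m, hm, hm_max⟩ := S.exists_max_image (fun x => u x - K * a x) hS
  have hK : (0 : 𝕜) < K := by
    have := h m hm m hm
    simp only [sub_self, zero_add, mul_one] at this
    exact_mod_cast this
  refine ⟨u m - K * a m, fun x hx => ?_⟩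
  rw [Int.ceil_eq_iff, lt_div_iff₀ hK, div_le_iff₀ hK]
  norm_cast
  constructor
  · linarith [h m hm x hx]
  · linarith [hm_max x hx]

theorem exists_coords_of_det_eq_one {R : Type*} [CommRing R] {p q r s : R}
    (h_det : p * s - q * r = 1) (u v : R) : ∃ x y, u = x * s + y * q ∧ v = x * r + y * p := by
  refine ⟨u * p - v * q, s * v - r * u, ?_, ?_⟩
  · linear_combination (-u) * h_det
  · linear_combination (-v) * h_det

theorem le_or_le_neg_of_mem_strip {R : Type*} [CommRing R] [LinearOrder R] [IsStrictOrderedRing R]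
    {α β : R} (hα : 0 < α) (hβ : 0 < β) {x y s q : ℤ} (hs : 0 < s) (hq : 0 < q)
    (h_pos : 0 < y * β - x * α) (h_lt : y * β - x * α < α + β) :
    q ≤ x * s + y * q ∨ x * s + y * q ≤ -s := by
  rcases le_or_gt 1 y with hy | hy <;> rcases le_or_gt 0 x with hx | hx
  · left; nlinarith
  · have hy' : (1 : R) ≤ y := by exact_mod_cast hy
    have hx' : (x : R) ≤ -1 := by exact_mod_cast Int.le_sub_one_of_lt hx
    nlinarith
  · have hy' : (y : R) ≤ 0 := by exact_mod_cast Int.lt_add_one_iff.1 hy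
    have hx' : (0 : R) ≤ x := by exact_mod_cast hx
    nlinarith
  · right; nlinarith

/-- The digital line of slope `t` and offset `b`: the least integer height at `i` on or above the
line `y = t x - b`. It is defined on `ℤ` so that the difference of two positions is a position. -/
noncomputable def lineCeil (t b : ℝ) (i : ℤ) : ℤ := ⌈(i : ℝ) * t - b⌉

/-- A bound `d * t < c` on the slope `t` of a line which is witnessed by two heights among
`a 1, …, a n` at positions differing by `d`. Negative `d` are allowed: for `0 < s`, the upper bound
`t < p / q` is encoded by `(q, p)` and the lower bound `r / s < t` by `(-s, -r)`. -/
def SlopeBound (a : ℤ → ℤ) (n d c : ℤ) : Prop :=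
  ∃ j ∈ Set.Icc 1 n, j + d ∈ Set.Icc 1 n ∧ a (j + d) - a j + 1 ≤ c

namespace SlopeBound

theorem of_mem_Icc (a : ℤ → ℤ) {n x y : ℤ} (hx : x ∈ Set.Icc 1 n) (hy : y ∈ Set.Icc 1 n) :
    SlopeBound a n (y - x) (a y - a x + 1) :=
  ⟨x, hx, by simpa using hy, by simp⟩

theorem abs_le_sub_one {a : ℤ → ℤ} {n d c : ℤ} (h : SlopeBound a n d c) : |d| ≤ n - 1 := by
  obtain ⟨j, ⟨_, _⟩, ⟨_, _⟩, -⟩ := h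
  exact abs_le.2 (by constructor <;> lia)

theorem halve {a : ℤ → ℤ} {n d c : ℤ} (h : SlopeBound a n (2 * d) (2 * c)) :
    SlopeBound a n d c := by
  obtain ⟨j, ⟨hj1, hjn⟩, ⟨hd1, hdn⟩, hc⟩ := h
  have h_mid : j + d ∈ Set.Icc 1 n := ⟨by lia, by lia⟩
  rw [show j + 2 * d = j + d + d by ring] at hd1 hdn hc
  by_cases h_first : a (j + d) - a j + 1 ≤ c
  · exact ⟨j, ⟨hj1, hjn⟩, h_mid, h_first⟩
  · exact ⟨j + d, h_mid, ⟨hd1, hdn⟩, by lia⟩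

variable {t b : ℝ} {n q p s r : ℤ}

theorem mul_slope_lt (h : SlopeBound (lineCeil t b) n q p) : q * t < p := by
  obtain ⟨j, -, -, hp⟩ := h
  have hp' : (lineCeil t b (j + q) : ℝ) - lineCeil t b j + 1 ≤ p := by exact_mod_cast hp
  have h_end : ((j + q : ℤ) : ℝ) * t - b ≤ lineCeil t b (j + q) := Int.le_ceil _
  have h_start : (lineCeil t b j : ℝ) < j * t - b + 1 := Int.ceil_lt_add_one _
  push_cast at h_end
  linarith

theorem det_pos (hq : 0 < q) (hs : 0 < s) (h_upper : SlopeBound (lineCeil t b) n q p)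
    (h_lower : SlopeBound (lineCeil t b) n (-s) (-r)) : 0 < p * s - q * r := by
  have hp := h_upper.mul_slope_lt
  have hr := h_lower.mul_slope_lt
  have hq' : (0 : ℝ) < q := by exact_mod_cast hq
  have hs' : (0 : ℝ) < s := by exact_mod_cast hs
  push_cast at hr
  have h_det : (0 : ℝ) < p * s - q * r := calc
    (0 : ℝ) < (p - q * t) * s + q * (s * t - r) :=
      add_pos (mul_pos (by linarith) hs') (mul_pos hq' (by linarith))
    _ = p * s - q * r := by ring
  exact_mod_cast h_det

theorem add_le_of_det_eq_one (hq : 0 < q) (hs : 0 < s)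
    (h_upper : SlopeBound (lineCeil t b) n q p)
    (h_lower : SlopeBound (lineCeil t b) n (-s) (-r)) (h_det : p * s - q * r = 1) :
    q + s ≤ n - 1 := by
  have hβ := h_upper.mul_slope_lt
  have hα := h_lower.mul_slope_lt
  obtain ⟨j, ⟨hj1, -⟩, ⟨-, hjn⟩, hp⟩ := h_upper
  obtain ⟨k, ⟨-, hkn⟩, ⟨hk1, -⟩, hr⟩ := h_lower
  obtain ⟨i, rfl⟩ : ∃ i, k = i + s := ⟨k - s, by ring⟩
  rw [add_neg_cancel_right] at hk1 hr
  set a := lineCeil t b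
  obtain ⟨x, y, h_run, h_rise⟩ := exists_coords_of_det_eq_one h_det (i - j) (a i - a j + 1)
  have h_height : (y : ℝ) * (p - q * t) - x * (s * t - r) = a i - a j + 1 - (i - j) * t := by
    have h_run' : (i : ℝ) - j = x * s + y * q := by exact_mod_cast h_run
    have h_rise' : (a i : ℝ) - a j + 1 = x * r + y * p := by exact_mod_cast h_rise
    rw [h_run', h_rise']
    ring
  have hi_ge : (i : ℝ) * t - b ≤ a i := Int.le_ceil _
  have hj_lt : (a j : ℝ) < j * t - b + 1 := Int.ceil_lt_add_one _
  have hi_lt : (a i : ℝ) < i * t - b + (s * t - r) := by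
    have h_end : (a (i + s) : ℝ) < ((i + s : ℤ) : ℝ) * t - b + 1 := Int.ceil_lt_add_one _
    have hr' : (a i : ℝ) - a (i + s) + 1 ≤ -r := by exact_mod_cast hr
    push_cast at h_end
    linarith
  have hj_ge : (j : ℝ) * t - b + 1 - (p - q * t) ≤ a j := by
    have h_end : ((j + q : ℤ) : ℝ) * t - b ≤ a (j + q) := Int.le_ceil _
    have hp' : (a (j + q) : ℝ) - a j + 1 ≤ p := by exact_mod_cast hp
    push_cast at h_end
    linarith
  push_cast at hα
  have h_strip := le_or_le_neg_of_mem_strip (α := s * t - r) (β := p - q * t)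
    (by linarith) (by linarith) hs hq (x := x) (y := y) (by linarith) (by linarith)
  lia

theorem add_half_le_of_det_eq_two {h : ℤ} (hq : 0 < q) (hh : 0 < h) (hq_odd : Odd q)
    (h_upper : SlopeBound (lineCeil t b) n q p)
    (h_lower : SlopeBound (lineCeil t b) n (-(2 * h)) (-r))
    (h_det : p * (2 * h) - q * r = 2) : q + h ≤ n - 1 := by
  have hr_even : Even (q * r) := ⟨p * h - 1, by linarith⟩
  obtain ⟨r, rfl⟩ := ((Int.even_mul.1 hr_even).resolve_left (Int.not_even_iff_odd.2 hq_odd)).two_dvd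
  rw [← mul_neg, ← mul_neg] at h_lower
  exact add_le_of_det_eq_one hq hh h_upper h_lower.halve (by linarith)

theorem half_add_le_of_det_eq_two {h : ℤ} (hh : 0 < h) (hs : 0 < s) (hs_odd : Odd s)
    (h_upper : SlopeBound (lineCeil t b) n (2 * h) p)
    (h_lower : SlopeBound (lineCeil t b) n (-s) (-r))
    (h_det : p * s - 2 * h * r = 2) : h + s ≤ n - 1 := by
  have hp_even : Even (p * s) := ⟨h * r + 1, by linarith⟩
  obtain ⟨p, rfl⟩ :=
    ((Int.even_mul.1 hp_even).resolve_right (Int.not_even_iff_odd.2 hs_odd)).two_dvd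
  exact add_le_of_det_eq_one hh hs h_upper.halve h_lower (by linarith)

theorem mul_le_of_det_eq_two (hn : 4 < n) (hq : 0 < q) (hs : 0 < s) (hqs : q ≠ s)
    (h_upper : SlopeBound (lineCeil t b) n q p)
    (h_lower : SlopeBound (lineCeil t b) n (-s) (-r)) (h_det : p * s - q * r = 2) :
    q * s ≤ (n - 1) * (n - 3) := by
  have hq_le : q ≤ n - 1 := (abs_le.1 h_upper.abs_le_sub_one).2
  have hs_le : s ≤ n - 1 := neg_le_neg_iff.1 (abs_le.1 h_lower.abs_le_sub_one).1
  by_contra! h_large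
  have hq_ge : n - 2 ≤ q := by
    by_contra! hq_small
    nlinarith
  have hs_ge : n - 2 ≤ s := by
    by_contra! hs_small
    nlinarith
  rcases Int.even_or_odd' q with ⟨h, rfl | hq_odd⟩
  · have hs_odd : Odd s := by grind
    have := half_add_le_of_det_eq_two (by lia) hs hs_odd h_upper h_lower h_det
    lia
  · obtain ⟨k, rfl⟩ : ∃ k, s = 2 * k := ⟨s / 2, by lia⟩
    have := add_half_le_of_det_eq_two hq (by lia) ⟨h, hq_odd⟩ h_upper h_lower h_det
    lia

theorem mul_lt_mul_det {K : ℤ} (hn : 4 < n) (hK : (n - 1) * (n - 3) < 2 * K) (hq : 0 < q)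
    (hs : 0 < s) (h_upper : SlopeBound (lineCeil t b) n q p)
    (h_lower : SlopeBound (lineCeil t b) n (-s) (-r)) : q * s < K * (p * s - q * r) := by
  have hq_le : q ≤ n - 1 := (abs_le.1 h_upper.abs_le_sub_one).2
  have hs_le : s ≤ n - 1 := neg_le_neg_iff.1 (abs_le.1 h_lower.abs_le_sub_one).1
  have h_det_pos := det_pos hq hs h_upper h_lower
  have hnK : n - 1 < K := by nlinarith
  obtain rfl | hqs := eq_or_ne q s
  · have h_factor : p * q - q * r = q * (p - r) := by ring
    rw [h_factor] at h_det_pos ⊢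
    have h_sub_pos : 0 < p - r := pos_of_mul_pos_right h_det_pos hq.le
    nlinarith
  obtain h_det | h_det | h_det :
      p * s - q * r = 1 ∨ p * s - q * r = 2 ∨ 3 ≤ p * s - q * r := by lia
  · have h_sum := add_le_of_det_eq_one hq hs h_upper h_lower h_det
    have h_amgm : 4 * (q * s) ≤ (n - 1) ^ 2 := by nlinarith [sq_nonneg (q - s)]
    rw [h_det]
    nlinarith
  · have := mul_le_of_det_eq_two hn hq hs hqs h_upper h_lower h_det
    rw [h_det]
    linarith
  · have h_prod : q * s ≤ (n - 1) * (n - 2) := by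
      rcases lt_or_gt_of_ne hqs with h | h <;> nlinarith
    have h_three : K * 3 ≤ K * (p * s - q * r) :=
      mul_le_mul_of_nonneg_left h_det (by lia)
    nlinarith

end SlopeBound

theorem exists_int_slope {a : ℤ → ℤ} {n K : ℤ} (hn : 2 ≤ n) (hK : 0 < K)
    (h_gap : ∀ q p s r : ℤ, 0 < q → 0 < s → SlopeBound a n q p → SlopeBound a n (-s) (-r) →
      q * s < K * (p * s - q * r)) :
    ∃ T : ℤ, ∀ d c : ℤ, SlopeBound a n d c → d * T < K * c := by
  have h_one : (1 : ℤ) ∈ Set.Icc 1 n := ⟨by lia, by lia⟩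
  have h_two : (2 : ℤ) ∈ Set.Icc 1 n := ⟨by lia, by lia⟩
  obtain ⟨p₁, hp₁⟩ : ∃ p, SlopeBound a n 1 p := ⟨_, .of_mem_Icc a h_one h_two⟩
  obtain ⟨r₁, hr₁⟩ : ∃ r, SlopeBound a n (-1) r :=
    ⟨a 1 - a 2 + 1, by simpa using SlopeBound.of_mem_Icc a h_two h_one⟩
  obtain ⟨T, h_lower, h_upper⟩ := exists_int_between_of_add_one_lt (R := ℚ)
    (L := {l | ∃ s r : ℤ, 0 < s ∧ SlopeBound a n (-s) (-r) ∧ K * r / s = l})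
    (U := {u | ∃ q p : ℤ, 0 < q ∧ SlopeBound a n q p ∧ K * p / q = u})
    ⟨_, 1, -r₁, one_pos, by simpa only [neg_neg] using hr₁, rfl⟩ ⟨_, 1, p₁, one_pos, hp₁, rfl⟩ (by
      rintro _ ⟨s, r, hs, hr, rfl⟩ _ ⟨q, p, hq, hp, rfl⟩
      have h_gap' : (q * s : ℚ) < K * (p * s - q * r) := by
        exact_mod_cast h_gap q p s r hq hs hp hr
      have hs' : (0 : ℚ) < s := by exact_mod_cast hs
      have hq' : (0 : ℚ) < q := by exact_mod_cast hq
      rw [div_add_one hs'.ne', div_lt_div_iff₀ hs' hq']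
      linarith)
  refine ⟨T, fun d c hdc => ?_⟩
  rcases lt_trichotomy d 0 with hd | rfl | hd
  · have hT := h_lower _ ⟨-d, -c, neg_pos.2 hd, by simpa only [neg_neg] using hdc, rfl⟩
    rw [div_lt_iff₀ (by exact_mod_cast neg_pos.2 hd)] at hT
    norm_cast at hT
    linarith
  · obtain ⟨j, -, -, hc⟩ := hdc
    have hc_pos : 1 ≤ c := by simpa using hc
    simpa using mul_pos hK hc_pos
  · have hT := h_upper _ ⟨d, c, hd, hdc, rfl⟩
    rw [lt_div_iff₀ (by exact_mod_cast hd)] at hT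
    norm_cast at hT
    linarith

theorem nAdmissible_of_lt {n K : ℕ} (hn : 4 < n) (hK : (n - 1) * (n - 3) < 2 * K) :
    NAdmissible n K := by
  intro t b
  have hn' : (4 : ℤ) < n := by exact_mod_cast hn
  have hK' : ((n : ℤ) - 1) * (n - 3) < 2 * K := by
    zify [show 1 ≤ n by lia, show 3 ≤ n by lia] at hK
    exact hK
  obtain ⟨T, hT⟩ := exists_int_slope (by lia) (by nlinarith) fun _ _ _ _ hq hs h_upper h_lower =>
    SlopeBound.mul_lt_mul_det (t := t) (b := b) hn' hK' hq hs h_upper h_lower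
  obtain ⟨B, hB⟩ := exists_ceil_sub_div_eq (𝕜 := ℝ) (Finset.Icc 1 (n : ℤ)) (fun i => i * T)
    (lineCeil t b) (K := K) (fun x hx y hy => by
      rw [← sub_mul]
      exact hT _ _ (.of_mem_Icc _ (Finset.mem_Icc.1 hy) (Finset.mem_Icc.1 hx)))
  refine ⟨T, B, fun i hi hin => ?_⟩
  simpa [lineCeil] using (hB i (Finset.mem_Icc.2 ⟨by lia, by lia⟩)).symm

/-- For `n > 4`, every `K` with `2K > (n−1)(n−3)` is `n`-admissible,
and hence the least `n`-admissible `K` is at most `(n−1)(n−3)/2 + 1`. -/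
theorem stmt_2 (n : ℕ) (hn : 4 < n) :
    (∀ K : ℕ, (n - 1) * (n - 3) < 2 * K → NAdmissible n K) ∧
    sInf {K : ℕ | 1 ≤ K ∧ NAdmissible n K} ≤ (n - 1) * (n - 3) / 2 + 1 := by
  refine ⟨fun K hK => nAdmissible_of_lt hn hK, Nat.sInf_le ⟨by lia, nAdmissible_of_lt hn ?_⟩⟩
  lia
end

section
/- Let n be a natural number with n > 2. Then every natural number K with K > (n − 1)·(n − 2) is n-admissible. -/
/-!
Two distinct fractions with denominators at most `N ≥ 2` differ by at least `1 / (N * (N - 1))`.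
Hence for `K > N * (N - 1)` the gap between the last such fraction before `t` and the first one
after `t` is longer than `1 / K` and contains some `τ = T / K`. Take `N = n - 1`, so that the
differences of distinct indices in `1, …, n` are such denominators. Replacing the slope `t` by `τ`
preserves all the strict inequalities `i * t - j * t < ⌈i * t - b⌉ - ⌈j * t - b⌉ + 1`, and these
are exactly what is needed to find an offset for the slope `τ` which realizes the same ceilings.
-/

section Ceil

variable {α : Type*} [CommRing α] [LinearOrder α] [IsStrictOrderedRing α] [FloorRing α]

theorem sub_lt_ceil_sub_ceil_add_one (x y : α) : x - y < ⌈x⌉ - ⌈y⌉ + 1 := by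
  linarith [Int.le_ceil x, Int.ceil_lt_add_one y]

theorem exists_forall_ceil_sub_eq {ι : Type*} {s : Finset ι} (hs : s.Nonempty) {f : ι → α}
    {c : ι → ℤ} (h : ∀ i ∈ s, ∀ j ∈ s, f i - f j < c i - c j + 1) :
    ∃ k ∈ s, ∀ i ∈ s, ⌈f i - (f k - c k)⌉ = c i := by
  obtain ⟨k, hk, hmax⟩ := s.exists_max_image (fun i ↦ f i - c i) hs
  refine ⟨k, hk, fun i hi ↦ Int.ceil_eq_iff.2 ⟨?_, ?_⟩⟩
  · linarith [h k hk i hi]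
  · linarith [hmax i hi]

end Ceil

section FareyFractions

variable {α : Type*} [Field α] {N : ℕ}

variable (α N) in
/-- The Farey fractions of order `N`: the elements of `α` that are fractions of integers with a
positive denominator at most `N`. Fractions need not be reduced, and, unlike in the classical Farey
sequence, they are not restricted to the unit interval. -/
def fareyFractions : Set α :=
  {x | ∃ (p : ℤ) (q : ℕ), 0 < q ∧ q ≤ N ∧ x = p / q}

theorem intCast_div_natCast_mem_fareyFractions {q : ℕ} (p : ℤ) (hq : 0 < q) (hqN : q ≤ N) :
    (p / q : α) ∈ fareyFractions α N :=
  ⟨p, q, hq, hqN, rfl⟩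

theorem neg_mem_fareyFractions {x : α} (hx : x ∈ fareyFractions α N) :
    -x ∈ fareyFractions α N := by
  obtain ⟨p, q, hq, hqN, rfl⟩ := hx
  exact ⟨-p, q, hq, hqN, by rw [Int.cast_neg, neg_div]⟩

variable [LinearOrder α] [IsStrictOrderedRing α]

theorem one_div_mul_le_div_sub_div {p r : ℤ} {q s : ℕ} (hq : 0 < q) (hs : 0 < s)
    (h : (p / q : α) < r / s) : 1 / (q * s : α) ≤ r / s - p / q := by
  have hq' : (0 : α) < q := Nat.cast_pos.2 hq
  have hs' : (0 : α) < s := Nat.cast_pos.2 hs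
  have hcross : p * s + 1 ≤ r * q := by
    rw [div_lt_div_iff₀ hq' hs'] at h
    exact_mod_cast h
  have hcross' : (p * s + 1 : α) ≤ r * q := by exact_mod_cast hcross
  rw [div_sub_div _ _ hs'.ne' hq'.ne', mul_comm (s : α) q]
  gcongr
  linarith

theorem one_div_le_div_sub_div_same {p r : ℤ} {q : ℕ} (h : (p / q : α) < r / q) :
    1 / (q : α) ≤ r / q - p / q := by
  have hpr : (p : α) < r :=
    lt_of_not_ge fun hrp ↦ h.not_ge (div_le_div_of_nonneg_right hrp q.cast_nonneg)
  have hpr' : (p + 1 : α) ≤ r := by exact_mod_cast Int.add_one_le_of_lt (Int.cast_lt.1 hpr)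
  rw [← sub_div]
  gcongr
  linarith

theorem mul_le_mul_sub_one_of_ne {q s : ℕ} (hq : q ≤ N) (hs : s ≤ N) (hne : q ≠ s) :
    q * s ≤ N * (N - 1) := by
  rcases hne.lt_or_gt with hlt | hlt
  · rw [mul_comm]
    exact Nat.mul_le_mul hs (by omega)
  · exact Nat.mul_le_mul hq (by omega)

theorem one_div_le_sub_of_mem_fareyFractions (hN : 2 ≤ N) {x y : α}
    (hx : x ∈ fareyFractions α N) (hy : y ∈ fareyFractions α N) (hxy : x < y) :
    1 / ((N * (N - 1) : ℕ) : α) ≤ y - x := by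
  obtain ⟨p, q, hq, hqN, rfl⟩ := hx
  obtain ⟨r, s, hs, hsN, rfl⟩ := hy
  by_cases hqs : q = s
  · subst hqs
    have hqN' : q ≤ N * (N - 1) := hqN.trans (Nat.le_mul_of_pos_right N (by omega))
    calc 1 / ((N * (N - 1) : ℕ) : α) ≤ 1 / (q : α) := by gcongr
      _ ≤ r / q - p / q := one_div_le_div_sub_div_same hxy
  · have hqs' : q * s ≤ N * (N - 1) := mul_le_mul_sub_one_of_ne hqN hsN hqs
    calc 1 / ((N * (N - 1) : ℕ) : α) ≤ 1 / ((q * s : ℕ) : α) := by gcongr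
      _ = 1 / (q * s : α) := by rw [Nat.cast_mul]
      _ ≤ r / s - p / q := one_div_mul_le_div_sub_div hq hs hxy

variable [FloorRing α]

theorem exists_isGreatest_fareyFractions_inter_Iio (hN : 0 < N) (t : α) :
    ∃ x, IsGreatest (fareyFractions α N ∩ Set.Iio t) x := by
  -- Among the fractions with denominator `q`, the last one before `t` is `(⌈q * t⌉ - 1) / q`.
  obtain ⟨q, hq, hmax⟩ := (Finset.Icc 1 N).exists_max_image
    (fun q : ℕ ↦ ((⌈q * t⌉ - 1 : ℤ) / q : α)) (Finset.nonempty_Icc.2 hN)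
  rw [Finset.mem_Icc] at hq
  refine ⟨_, ⟨intCast_div_natCast_mem_fareyFractions (⌈q * t⌉ - 1) hq.1 hq.2, ?_⟩, ?_⟩
  · rw [Set.mem_Iio, div_lt_iff₀' (Nat.cast_pos.2 hq.1)]
    exact Int.lt_ceil.1 (sub_one_lt _)
  · rintro _ ⟨⟨p, d, hd, hdN, rfl⟩, hlt⟩
    rw [Set.mem_Iio, div_lt_iff₀' (Nat.cast_pos.2 hd)] at hlt
    have hp : p ≤ ⌈d * t⌉ - 1 := Int.le_sub_one_of_lt (Int.lt_ceil.2 hlt)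
    calc (p / d : α) ≤ (⌈d * t⌉ - 1 : ℤ) / d := by gcongr
      _ ≤ (⌈q * t⌉ - 1 : ℤ) / q := hmax d (Finset.mem_Icc.2 ⟨hd, hdN⟩)

theorem exists_isLeast_fareyFractions_inter_Ioi (hN : 0 < N) (t : α) :
    ∃ x, IsLeast (fareyFractions α N ∩ Set.Ioi t) x := by
  obtain ⟨x, ⟨hx, hxt⟩, hmax⟩ := exists_isGreatest_fareyFractions_inter_Iio hN (-t)
  refine ⟨-x, ⟨neg_mem_fareyFractions hx, lt_neg.2 hxt⟩, fun y ⟨hy, hty⟩ ↦ ?_⟩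
  exact neg_le.1 (hmax ⟨neg_mem_fareyFractions hy, neg_lt_neg hty⟩)

theorem exists_int_div_mem_Ioo {K x y : α} (hK : 0 < K) (h : 1 / K < y - x) :
    ∃ T : ℤ, T / K ∈ Set.Ioo x y := by
  rw [div_lt_iff₀ hK] at h
  refine ⟨⌊x * K⌋ + 1, (lt_div_iff₀ hK).2 ?_, (div_lt_iff₀ hK).2 ?_⟩
  · exact_mod_cast Int.lt_floor_add_one (x * K)
  · push_cast
    linarith [Int.floor_le (x * K)]

theorem exists_int_div_forall_mem_fareyFractions {K : ℕ} (hN : 2 ≤ N) (hK : N * (N - 1) < K)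
    (t : α) :
    ∃ T : ℤ, ∀ x ∈ fareyFractions α N, (x < t → x < T / K) ∧ (t < x → (T / K : α) < x) := by
  obtain ⟨x, ⟨hx, hxt⟩, hmax⟩ := exists_isGreatest_fareyFractions_inter_Iio (by omega : 0 < N) t
  obtain ⟨y, ⟨hy, hty⟩, hmin⟩ := exists_isLeast_fareyFractions_inter_Ioi (by omega : 0 < N) t
  have hpos : 0 < N * (N - 1) := Nat.mul_pos (by omega) (by omega)
  have hgap : 1 / (K : α) < y - x :=
    calc 1 / (K : α) < 1 / ((N * (N - 1) : ℕ) : α) :=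
          one_div_lt_one_div_of_lt (Nat.cast_pos.2 hpos) (Nat.cast_lt.2 hK)
      _ ≤ y - x := one_div_le_sub_of_mem_fareyFractions hN hx hy (hxt.trans hty)
  obtain ⟨T, hxT, hTy⟩ := exists_int_div_mem_Ioo (Nat.cast_pos.2 (hpos.trans hK)) hgap
  exact ⟨T, fun z hz ↦ ⟨fun hzt ↦ (hmax ⟨hz, hzt⟩).trans_lt hxT,
    fun htz ↦ hTy.trans_le (hmin ⟨hz, htz⟩)⟩⟩

theorem mul_sub_mul_lt_ceil_sub_ceil_add_one {N : ℕ} {t τ : α}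
    (hτ : ∀ x ∈ fareyFractions α N, (x < t → x < τ) ∧ (t < x → τ < x)) (b : α) {i j : ℕ}
    (hij : i ≤ j + N) (hji : j ≤ i + N) :
    i * τ - j * τ < ⌈i * t - b⌉ - ⌈j * t - b⌉ + 1 := by
  have ht := sub_lt_ceil_sub_ceil_add_one (i * t - b) (j * t - b)
  generalize ⌈i * t - b⌉ = u at ht ⊢
  generalize ⌈j * t - b⌉ = v at ht ⊢
  rcases lt_trichotomy i j with hlt | rfl | hlt
  · obtain ⟨d, rfl⟩ := Nat.exists_eq_add_of_le hlt.le
    have hd : (0 : α) < d := Nat.cast_pos.2 (by omega)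
    have hx := (hτ _ (intCast_div_natCast_mem_fareyFractions (q := d) (v - u - 1)
      (by omega) (by omega))).1
    rw [div_lt_iff₀ hd, div_lt_iff₀ hd] at hx
    push_cast at ht hx ⊢
    linarith [hx (by linarith)]
  · linarith
  · obtain ⟨d, rfl⟩ := Nat.exists_eq_add_of_le hlt.le
    have hd : (0 : α) < d := Nat.cast_pos.2 (by omega)
    have hx := (hτ _ (intCast_div_natCast_mem_fareyFractions (q := d) (u - v + 1)
      (by omega) (by omega))).2
    rw [lt_div_iff₀ hd, lt_div_iff₀ hd] at hx
    push_cast at ht hx ⊢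
    linarith [hx (by linarith)]

end FareyFractions

/-- For `n > 2`, every `K > (n−1)(n−2)` is `n`-admissible. -/
theorem stmt_3 (n : ℕ) (hn : 2 < n) :
    ∀ K : ℕ, (n - 1) * (n - 2) < K → NAdmissible n K := by
  intro K hK t b
  obtain ⟨T, hT⟩ :=
    exists_int_div_forall_mem_fareyFractions (N := n - 1) (Nat.le_sub_one_of_lt hn) hK t
  have hpair : ∀ i ∈ Finset.Icc 1 n, ∀ j ∈ Finset.Icc 1 n,
      (i * (T / K) - j * (T / K) : ℝ) < ⌈i * t - b⌉ - ⌈j * t - b⌉ + 1 := by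
    intro i hi j hj
    rw [Finset.mem_Icc] at hi hj
    exact mul_sub_mul_lt_ceil_sub_ceil_add_one hT b (by omega) (by omega)
  obtain ⟨k, -, hk⟩ := exists_forall_ceil_sub_eq (Finset.nonempty_Icc.2 (by omega)) hpair
  refine ⟨T, k * T - K * ⌈k * t - b⌉, fun i hi hin ↦ ?_⟩
  have hK₀ : (K : ℝ) ≠ 0 := Nat.cast_ne_zero.2 (Nat.ne_zero_of_lt hK)
  rw [← hk i (Finset.mem_Icc.2 ⟨hi, hin⟩)]
  congr 1
  push_cast
  field_simp
end

section
/- Let n be a natural number with n ≥ 15. Then every n-admissible natural number K satisfies 4·K ≥ (n − 1)². -/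
/-!
The line of slope `1 / r` vanishing at `i = 1` changes its ceiling right after `i = 1` and right
after `i = r + 1`. An approximation `(i * T - B) / K` with the same ceilings satisfies
`(r - 1) * T < K < (r + 1) * T`, so every interval `(K / (c + 2), K / c)` with `c + 2 < n` contains
an integer. For `c = n - 3` this gives `q` with `c * q < K < (c + 2) * q`. Let `g = ⌊K / q⌋`, so
`c ≤ g < c + 2`. As `K / g ≥ q`, the integer in `(K / g, K / (g - 2))` is at least `q + 1`, so
`(g - 2) * (q + 1) < K < (g + 1) * q`, which forces `g ≤ 3 * q`. Hence `c ≤ 3 * q`, so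
`c + 4 ≤ 4 * q` as soon as `c ≥ 10`, and
`4 * K ≥ 4 * (c * q + 1) ≥ c * (c + 4) + 4 = (c + 2) ^ 2`.
-/

namespace NAdmissible

variable {n K : ℕ}

lemma exists_le_intCast_iff (h : NAdmissible n K) (hK : 0 < K) (t b : ℝ) :
    ∃ T B : ℤ, ∀ i : ℕ, 1 ≤ i → i ≤ n → ∀ z : ℤ, i * t - b ≤ z ↔ i * T - B ≤ z * K := by
  obtain ⟨T, B, hTB⟩ := h t b
  refine ⟨T, B, fun i hi hin z ↦ ?_⟩
  have hK' : (0 : ℝ) < K := by exact_mod_cast hK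
  rw [← Int.ceil_le, hTB i hi hin, Int.ceil_le, div_le_iff₀ hK']
  norm_cast

lemma exists_mul_lt_and_lt_mul (h : NAdmissible n K) (hK : 0 < K) {c : ℕ} (hc : c + 2 < n) :
    ∃ T : ℕ, c * T < K ∧ K < (c + 2) * T := by
  obtain ⟨T, B, hTB⟩ := h.exists_le_intCast_iff hK (1 / (c + 1 : ℕ)) (1 / (c + 1 : ℕ))
  have line_le_iff (i : ℕ) (hi : 1 ≤ i) (hin : i ≤ n) (z : ℤ) :
      (i : ℤ) - 1 ≤ z * (c + 1 : ℕ) ↔ i * T - B ≤ z * K := by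
    rw [← hTB i hi hin z, mul_one_div, ← sub_div, div_le_iff₀ (by positivity)]
    norm_cast
  have at_one : T - B ≤ 0 := by
    simpa using line_le_iff 1 le_rfl (by lia) 0
  have at_two : 0 < 2 * T - B := by
    simpa using line_le_iff 2 (by lia) (by lia) 0
  have at_c_add_two : (c + 2) * T - B ≤ K := by
    simpa [add_sub_assoc] using line_le_iff (c + 2) (by lia) (by lia) 1
  have at_c_add_three : K < (c + 3) * T - B := by
    simpa [add_sub_assoc, lt_sub_iff_add_lt] using line_le_iff (c + 3) (by lia) (by lia) 1
  lift T to ℕ using by linarith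
  refine ⟨T, ?_, ?_⟩ <;> zify <;> linarith

lemma mul_succ_lt_of_mul_le (h : NAdmissible n K) (hK : 0 < K) {c q : ℕ} (hc : c + 2 < n)
    (hq : (c + 2) * q ≤ K) : c * (q + 1) < K := by
  obtain ⟨T, hcT, hT⟩ := h.exists_mul_lt_and_lt_mul hK hc
  have hqT : q < T := lt_of_mul_lt_mul_left (hq.trans_lt hT) (Nat.zero_le _)
  exact (Nat.mul_le_mul_left c hqT).trans_lt hcT

lemma div_le_three_mul (h : NAdmissible n K) (hK : 0 < K) {q : ℕ} (hq : 0 < q)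
    (hqn : K / q < n) : K / q ≤ 3 * q := by
  obtain hlt | hle := lt_or_ge (K / q) 2
  · lia
  obtain ⟨d, hd⟩ := Nat.exists_eq_add_of_le' hle
  have hlower : d * (q + 1) < K :=
    h.mul_succ_lt_of_mul_le hK (hd ▸ hqn) (hd ▸ Nat.div_mul_le_self K q)
  have hupper : K < q * (d + 2 + 1) := hd ▸ Nat.lt_mul_div_succ K hq
  rw [hd]
  linarith

end NAdmissible

theorem stmt_4_general (n : ℕ) (hn : 13 ≤ n) (K : ℕ) (hK : 1 ≤ K)
    (h : NAdmissible n K) : (n - 1) ^ 2 ≤ 4 * K := by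
  obtain ⟨c, rfl⟩ := Nat.exists_eq_add_of_le' (show 3 ≤ n by lia)
  obtain ⟨q, hcq, hqc⟩ := h.exists_mul_lt_and_lt_mul hK (Nat.lt_succ_self (c + 2))
  have hq : 0 < q := Nat.pos_of_mul_pos_left (hK.trans hqc.le)
  have hc_le : c ≤ K / q := (Nat.le_div_iff_mul_le hq).2 hcq.le
  have hdiv_lt : K / q < c + 2 := (Nat.div_lt_iff_lt_mul hq).2 hqc
  have hdiv_le : K / q ≤ 3 * q := h.div_le_three_mul hK hq (by lia)
  have hc_add_four : c + 4 ≤ 4 * q := by lia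
  calc (c + 3 - 1) ^ 2 = c * (c + 4) + 4 := by rw [Nat.add_sub_assoc (by lia)]; ring
    _ ≤ c * (4 * q) + 4 := by gcongr
    _ = 4 * (c * q + 1) := by ring
    _ ≤ 4 * K := by gcongr; exact hcq

/-- For `n ≥ 15`, every `n`-admissible `K ≥ 1` satisfies `4K ≥ (n−1)²`. -/
theorem stmt_4 (n : ℕ) (hn : 15 ≤ n) (K : ℕ) (hK : 1 ≤ K)
    (h : NAdmissible n K) : (n - 1) ^ 2 ≤ 4 * K :=
  stmt_4_general n (by lia) K hK h
end

section
/- Let n ≥ 1 and K ≥ 1 be natural numbers, let t and b be real numbers, and set Sᵢ = ⌈i·t − b⌉ for i ∈ {1, …, n}. Then there exist integers T and B with ⌈(i·T − B)/K⌉ = Sᵢ for all i ∈ {1, …, n} if and only if there exists an integer T such that: (a) for all i, j ∈ {1, …, n} with i > j, ⌊(Sᵢ − Sⱼ − 1)·K/(i − j)⌋ < T and T < ⌈(Sᵢ − Sⱼ + 1)·K/(i − j)⌉; and (b) for all i, j ∈ {1, …, n}, i·T − K·Sᵢ < j·T − K·Sⱼ + K. -/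
/-!
For a fixed `T`, the equation at `i` says that `B` lies in the half-open interval
`[i * T - K * S i, i * T - K * S i + K)`. Finitely many such intervals in a linear order have a
common point as soon as each left endpoint is below each right endpoint, which is (b). Since (b)
bounds `|(i - j) * T - K * (S i - S j)|` by `K`, dividing by `i - j` yields (a).
-/

section HalfOpenIntervals

variable {ι α : Type*} [LinearOrder α] [Nonempty α]

theorem exists_forall_mem_Ico_iff (s : Finset ι) (f g : ι → α) :
    (∃ b, ∀ i ∈ s, b ∈ Set.Ico (f i) (g i)) ↔ ∀ i j, i ∈ s → j ∈ s → f i < g j := by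
  constructor
  · rintro ⟨b, hb⟩ i j hi hj
    exact (hb i hi).1.trans_lt (hb j hj).2
  · intro h
    obtain rfl | hs := s.eq_empty_or_nonempty
    · simp
    · obtain ⟨m, hm, hmax⟩ := s.exists_max_image f hs
      exact ⟨f m, fun i hi ↦ ⟨hmax i hi, h m i hm hi⟩⟩

end HalfOpenIntervals

section Rounding

variable {k : Type*} [Field k] [LinearOrder k] [IsStrictOrderedRing k] [FloorRing k]

theorem ceil_sub_div_eq_iff_mem_Ico {a b c K : ℤ} (hK : 0 < K) :
    ⌈((a : k) - b) / K⌉ = c ↔ b ∈ Set.Ico (a - K * c) (a - K * c + K) := by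
  have hK' : (0 : k) < K := Int.cast_pos.2 hK
  rw [Int.ceil_eq_iff, lt_div_iff₀ hK', div_le_iff₀ hK', Set.mem_Ico]
  norm_cast
  constructor <;> rintro ⟨h₁, h₂⟩ <;> constructor <;> linarith

theorem exists_forall_ceil_sub_div_eq_iff {ι : Type*} (s : Finset ι) (a c : ι → ℤ) {K : ℤ}
    (hK : 0 < K) :
    (∃ b : ℤ, ∀ i ∈ s, ⌈((a i : k) - b) / K⌉ = c i) ↔
      ∀ i j, i ∈ s → j ∈ s → a i - K * c i < a j - K * c j + K := by
  simp only [ceil_sub_div_eq_iff_mem_Ico hK]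
  exact exists_forall_mem_Ico_iff s _ _

theorem floor_div_lt_and_lt_ceil_div_iff_abs_sub_lt {d m r : k} {z : ℤ} (hm : 0 < m) :
    (⌊(d - 1) * r / m⌋ < z ∧ z < ⌈(d + 1) * r / m⌉) ↔ |m * z - r * d| < r := by
  rw [Int.floor_lt, Int.lt_ceil, div_lt_iff₀ hm, lt_div_iff₀ hm, abs_sub_lt_iff]
  constructor <;> rintro ⟨h₁, h₂⟩ <;> constructor <;> linarith

end Rounding

theorem stmt_6_general (n K : ℕ) (hK : 1 ≤ K) (S : ℕ → ℤ) (T : ℤ) :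
    (∃ B : ℤ, ∀ i : ℕ, 1 ≤ i → i ≤ n →
        ⌈((i : ℝ) * (T : ℝ) - (B : ℝ)) / (K : ℝ)⌉ = S i) ↔
      (∀ i j : ℕ, 1 ≤ j → j < i → i ≤ n →
        ⌊((S i : ℝ) - (S j : ℝ) - 1) * (K : ℝ) / ((i : ℝ) - (j : ℝ))⌋ < T ∧
        T < ⌈((S i : ℝ) - (S j : ℝ) + 1) * (K : ℝ) / ((i : ℝ) - (j : ℝ))⌉) ∧
      (∀ i j : ℕ, 1 ≤ i → i ≤ n → 1 ≤ j → j ≤ n →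
        (i : ℤ) * T - (K : ℤ) * S i < (j : ℤ) * T - (K : ℤ) * S j + (K : ℤ)) := by
  rw [and_iff_right_of_imp]
  · simpa [and_imp] using
      exists_forall_ceil_sub_div_eq_iff (k := ℝ) (Finset.Icc 1 n) (fun i ↦ i * T) S
        (Int.natCast_pos.2 hK)
  · intro hb i j hj hji hi
    have hi₁ : 1 ≤ i := hj.trans hji.le
    have hj₁ : j ≤ n := hji.le.trans hi
    have hij := hb i j hi₁ hi hj hj₁
    have hji' := hb j i hj hj₁ hi₁ hi
    have habs : |((i : ℤ) - j) * T - K * (S i - S j)| < K :=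
      abs_lt.2 ⟨by linarith, by linarith⟩
    exact (floor_div_lt_and_lt_ceil_div_iff_abs_sub_lt
      (sub_pos.2 (Nat.cast_lt.2 hji))).2 (by exact_mod_cast habs)

/-- Existence of `T, B` with `⌈(i·T − B)/K⌉ = Sᵢ` for all
`i ∈ {1, …, n}` is equivalent to the existence of an integer `T` satisfying the
floor/ceiling bounds (a) and the strict inequalities (b). -/
theorem stmt_6 (n K : ℕ) (hn : 1 ≤ n) (hK : 1 ≤ K) (t b : ℝ)
    (S : ℕ → ℤ) (hS : ∀ i : ℕ, 1 ≤ i → i ≤ n → S i = ⌈(i : ℝ) * t - b⌉) :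
    (∃ T B : ℤ, ∀ i : ℕ, 1 ≤ i → i ≤ n →
        ⌈((i : ℝ) * (T : ℝ) - (B : ℝ)) / (K : ℝ)⌉ = S i) ↔
    (∃ T : ℤ,
      (∀ i j : ℕ, 1 ≤ j → j < i → i ≤ n →
        ⌊((S i : ℝ) - (S j : ℝ) - 1) * (K : ℝ) / ((i : ℝ) - (j : ℝ))⌋ < T ∧
        T < ⌈((S i : ℝ) - (S j : ℝ) + 1) * (K : ℝ) / ((i : ℝ) - (j : ℝ))⌉) ∧
      (∀ i j : ℕ, 1 ≤ i → i ≤ n → 1 ≤ j → j ≤ n →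
        (i : ℤ) * T - (K : ℤ) * S i < (j : ℤ) * T - (K : ℤ) * S j + (K : ℤ))) :=
  exists_congr (stmt_6_general n K hK S)
end

section
/- Let n ≥ 1 and K ≥ 1 be natural numbers. Suppose that for every real t with 0 ≤ t < 1 and every real b with ⌈t − b⌉ = 1 there exist integers T and B such that ⌈i·t − b⌉ = ⌈(i·T − B)/K⌉ for all i ∈ {1, …, n}. Then K is n-admissible, i.e., for ALL real numbers t and b there exist integers T and B such that ⌈i·t − b⌉ = ⌈(i·T − B)/K⌉ for all i ∈ {1, …, n}. -/
/-!
Replacing `(t, b)` by `(t + p, b + q)` with `p, q ∈ ℤ` changes `⌈i * t - b⌉` by the integer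
`i * p - q`, and replacing `(T, B)` by `(T + K * p, B + K * q)` changes `⌈(i * T - B) / K⌉` by the
same integer. Such translations bring the slope into `[0, 1)` and give the ceiling at one chosen
index any prescribed value.
-/

theorem ceil_mul_add_sub_add_intCast {R : Type*} [Ring R] [LinearOrder R]
    [IsStrictOrderedRing R] [FloorRing R] (t b : R) (i p q : ℤ) :
    ⌈i * (t + p) - (b + q)⌉ = ⌈i * t - b⌉ + (i * p - q) := by
  rw [← Int.ceil_add_intCast, mul_add, add_sub_add_comm]
  push_cast
  rfl

section

variable {R : Type*} [Field R] [LinearOrder R] [FloorRing R]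

/-- The sequence `i ↦ ⌈i * t - b⌉` agrees, at the indices in `s`, with the sequence attached to the
slope `T / K` and the offset `B / K` for some integers `T` and `B`. A natural number `K` is
`n`-admissible when this holds over `ℝ` with `s = {1, …, n}`, for all `t` and `b`. -/
def IsCeilRealizable (K : ℤ) (s : Set ℤ) (t b : R) : Prop :=
  ∃ T B : ℤ, ∀ i ∈ s, ⌈i * t - b⌉ = ⌈((i : R) * T - B) / K⌉

variable [IsStrictOrderedRing R]

theorem IsCeilRealizable.add_intCast {K : ℤ} {s : Set ℤ} {t b : R} (hK : K ≠ 0)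
    (h : IsCeilRealizable K s t b) (p q : ℤ) : IsCeilRealizable K s (t + p) (b + q) := by
  obtain ⟨T, B, hTB⟩ := h
  refine ⟨T + K * p, B + K * q, fun i hi => ?_⟩
  have hK' : (K : R) ≠ 0 := Int.cast_ne_zero.mpr hK
  calc ⌈i * (t + p) - (b + q)⌉
      = ⌈i * t - b⌉ + (i * p - q) := ceil_mul_add_sub_add_intCast t b i p q
    _ = ⌈(i : R) * (T / K) - B / K⌉ + (i * p - q) := by
      rw [hTB i hi, sub_div, mul_div_assoc]
    _ = ⌈(i : R) * (T / K + p) - (B / K + q)⌉ :=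
      (ceil_mul_add_sub_add_intCast _ _ i p q).symm
    _ = ⌈((i : R) * (T + K * p : ℤ) - (B + K * q : ℤ)) / K⌉ := by
      congr 1
      push_cast
      field_simp

theorem stmt_7_general {K : ℤ} (hK : K ≠ 0) (s : Set ℤ) (j c : ℤ)
    (h : ∀ t b : R, 0 ≤ t → t < 1 → ⌈j * t - b⌉ = c → IsCeilRealizable K s t b) (t b : R) :
    IsCeilRealizable K s t b := by
  set q : ℤ := ⌈j * Int.fract t - b⌉ - c with hq
  have normalized : ⌈j * Int.fract t - (b + q)⌉ = c := by
    rw [← sub_sub, Int.ceil_sub_intCast, hq, sub_sub_cancel]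
  have realizable := h _ _ (Int.fract_nonneg t) (Int.fract_lt_one t) normalized
  simpa only [Int.fract_add_floor, Int.cast_neg, add_neg_cancel_right] using
    realizable.add_intCast hK ⌊t⌋ (-q)

end

/-- It suffices to check `t ∈ [0, 1)` with `⌈t − b⌉ = 1` to conclude
that `K` is `n`-admissible. -/
theorem stmt_7 (n K : ℕ) (hn : 1 ≤ n) (hK : 1 ≤ K)
    (h : ∀ t b : ℝ, 0 ≤ t → t < 1 → ⌈t - b⌉ = 1 →
      ∃ T B : ℤ, ∀ i : ℕ, 1 ≤ i → i ≤ n →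
        ⌈(i : ℝ) * t - b⌉ = ⌈((i : ℝ) * (T : ℝ) - (B : ℝ)) / (K : ℝ)⌉) :
    ∀ t b : ℝ, ∃ T B : ℤ, ∀ i : ℕ, 1 ≤ i → i ≤ n →
      ⌈(i : ℝ) * t - b⌉ = ⌈((i : ℝ) * (T : ℝ) - (B : ℝ)) / (K : ℝ)⌉ := by
  have general := stmt_7_general (R := ℝ) (K := K) (by lia) ((↑) '' Set.Icc 1 n) 1 1
  simp only [IsCeilRealizable, Set.forall_mem_image, Set.mem_Icc, and_imp, Int.cast_natCast,
    Int.cast_one, one_mul] at general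
  exact general h
end

section
/- Let n ≥ 1 be a natural number and let S₁, …, Sₙ be integers. If for all i, j, l, m ∈ {1, …, n} with j > i and m < l one has (j·(Sᵢ − 1) − i·Sⱼ)/(i − j) > (m·(S_l − 1) − l·S_m)/(l − m) (these are real divisions, with i − j < 0 and l − m > 0), then there exist real numbers t and b such that Sᵢ = ⌈i·t − b⌉ for every i ∈ {1, …, n}. -/
/-!
For positive `xᵢ`, the line `y = x * t - b` passes strictly between `(xᵢ, Sᵢ - 1)` and `(xᵢ, Sᵢ)`
exactly when `(Sᵢ - 1 + b) / xᵢ < t < (Sᵢ + b) / xᵢ`. The unknowns are eliminated one at a time, as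
in Fourier–Motzkin elimination. A slope `t` exists as soon as every lower bound is less than every
upper bound. For fixed `i` and `j` this compares the slopes of the lines from `(0, -b)` to
`(xᵢ, Sᵢ - 1)` and to `(xⱼ, Sⱼ)`, so it bounds `b` by the offset of the line through these two
points: from above when `xᵢ < xⱼ`, from below when `xⱼ < xᵢ`. The hypothesis says that every lower
bound on `b` obtained in this way is less than every upper bound.
-/

theorem exists_between_finite_families {α ι κ : Type*} [LinearOrder α] [DenselyOrdered α]
    [NoMinOrder α] [NoMaxOrder α] [Nonempty α] {s : Finset ι} {u : Finset κ} {f : ι → α}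
    {g : κ → α} (hfg : ∀ i ∈ s, ∀ j ∈ u, f i < g j) :
    ∃ a, (∀ i ∈ s, f i < a) ∧ ∀ j ∈ u, a < g j := by
  classical
  simpa only [Finset.forall_mem_image] using
    Order.exists_between_finsets (s.image f) (u.image g)
      (by simpa only [Finset.forall_mem_image] using hfg)

/-- The number `b` for which the line through `p` and `q` has an equation `y = x * t - b`, that is,
minus its intercept with the vertical axis. The value is junk when `p.1 = q.1`. -/
def lineOffset {K : Type*} [Field K] (p q : K × K) : K :=
  (q.1 * p.2 - p.1 * q.2) / (p.1 - q.1)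

section LinearOrderedField

variable {K : Type*} [Field K] [LinearOrder K] [IsStrictOrderedRing K]

theorem lt_lineOffset_iff_div_lt_div {p q : K × K} {b : K} (hp : 0 < p.1) (hpq : p.1 < q.1) :
    b < lineOffset p q ↔ (p.2 + b) / p.1 < (q.2 + b) / q.1 := by
  rw [lineOffset, lt_div_iff_of_neg (sub_neg.2 hpq), div_lt_div_iff₀ hp (hp.trans hpq)]
  constructor <;> intro h <;> linarith

theorem lineOffset_lt_iff_div_lt_div {p q : K × K} {b : K} (hq : 0 < q.1) (hqp : q.1 < p.1) :
    lineOffset p q < b ↔ (p.2 + b) / p.1 < (q.2 + b) / q.1 := by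
  rw [lineOffset, div_lt_iff₀ (sub_pos.2 hqp), div_lt_div_iff₀ (hq.trans hqp) hq]
  constructor <;> intro h <;> linarith

variable {ι : Type*} {s : Finset ι} {x lower upper : ι → K}

theorem exists_offset_forall_div_lt_div (hx : ∀ i ∈ s, 0 < x i) (hinj : Set.InjOn x s)
    (hlt : ∀ i ∈ s, lower i < upper i)
    (hoffset : ∀ i ∈ s, ∀ j ∈ s, ∀ l ∈ s, ∀ m ∈ s, x i < x j → x m < x l →
      lineOffset (x l, lower l) (x m, upper m) < lineOffset (x i, lower i) (x j, upper j)) :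
    ∃ b, ∀ i ∈ s, ∀ j ∈ s, (lower i + b) / x i < (upper j + b) / x j := by
  let offset (p : ι × ι) : K := lineOffset (x p.1, lower p.1) (x p.2, upper p.2)
  let increasing : Finset (ι × ι) := {p ∈ s ×ˢ s | x p.1 < x p.2}
  let decreasing : Finset (ι × ι) := {p ∈ s ×ˢ s | x p.2 < x p.1}
  have hsep : ∀ p ∈ decreasing, ∀ q ∈ increasing, offset p < offset q := by
    simp only [decreasing, increasing, Finset.mem_filter, Finset.mem_product]
    rintro ⟨l, m⟩ ⟨⟨hl, hm⟩, hml⟩ ⟨i, j⟩ ⟨⟨hi, hj⟩, hij⟩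
    exact hoffset i hi j hj l hl m hm hij hml
  obtain ⟨b, hb_lower, hb_upper⟩ := exists_between_finite_families hsep
  simp only [decreasing, increasing, Finset.mem_filter, Finset.mem_product] at hb_lower hb_upper
  refine ⟨b, fun i hi j hj ↦ ?_⟩
  rcases lt_trichotomy (x i) (x j) with hij | hij | hji
  · exact (lt_lineOffset_iff_div_lt_div (hx i hi) hij).1 (hb_upper (i, j) ⟨⟨hi, hj⟩, hij⟩)
  · obtain rfl := hinj hi hj hij
    have := hx i hi
    have := hlt i hi
    gcongr
  · exact (lineOffset_lt_iff_div_lt_div (hx j hj) hji).1 (hb_lower (i, j) ⟨⟨hi, hj⟩, hji⟩)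

theorem exists_slope_forall_lt_and_lt {b : K} (hx : ∀ i ∈ s, 0 < x i)
    (hslope : ∀ i ∈ s, ∀ j ∈ s, (lower i + b) / x i < (upper j + b) / x j) :
    ∃ t, ∀ i ∈ s, lower i < x i * t - b ∧ x i * t - b < upper i := by
  obtain ⟨t, ht_lower, ht_upper⟩ := exists_between_finite_families hslope
  refine ⟨t, fun i hi ↦ ⟨?_, ?_⟩⟩
  · exact lt_sub_iff_add_lt.2 ((div_lt_iff₀' (hx i hi)).1 (ht_lower i hi))
  · exact sub_lt_iff_lt_add.2 ((lt_div_iff₀' (hx i hi)).1 (ht_upper i hi))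

theorem stmt_10_general [FloorRing K] {S : ι → ℤ} (hx : ∀ i ∈ s, 0 < x i) (hinj : Set.InjOn x s)
    (h : ∀ i ∈ s, ∀ j ∈ s, ∀ l ∈ s, ∀ m ∈ s, x i < x j → x m < x l →
      (x m * (S l - 1) - x l * S m) / (x l - x m) <
      (x j * (S i - 1) - x i * S j) / (x i - x j)) :
    ∃ t b : K, ∀ i ∈ s, S i = ⌈x i * t - b⌉ := by
  obtain ⟨b, hb⟩ := exists_offset_forall_div_lt_div (lower := fun i ↦ (S i : K) - 1)
    (upper := fun i ↦ (S i : K)) hx hinj (fun _ _ ↦ sub_one_lt _) h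
  obtain ⟨t, ht⟩ := exists_slope_forall_lt_and_lt hx hb
  exact ⟨t, b, fun i hi ↦ (Int.ceil_eq_iff.2 ⟨(ht i hi).1, (ht i hi).2.le⟩).symm⟩

end LinearOrderedField

/-- If for all `i < j` and `m < l` in `{1, …, n}` we have
`(j(Sᵢ−1) − iSⱼ)/(i−j) > (m(S_l−1) − lS_m)/(l−m)`, then `S` is generated by
some real `t, b` via `Sᵢ = ⌈i·t − b⌉`. -/
theorem stmt_10 (n : ℕ) (hn : 1 ≤ n) (S : ℕ → ℤ)
    (h : ∀ i j l m : ℕ, 1 ≤ i → i < j → j ≤ n → 1 ≤ m → m < l → l ≤ n →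
      ((m : ℝ) * ((S l : ℝ) - 1) - (l : ℝ) * (S m : ℝ)) / ((l : ℝ) - (m : ℝ)) <
      ((j : ℝ) * ((S i : ℝ) - 1) - (i : ℝ) * (S j : ℝ)) / ((i : ℝ) - (j : ℝ))) :
    ∃ t b : ℝ, ∀ i : ℕ, 1 ≤ i → i ≤ n → S i = ⌈(i : ℝ) * t - b⌉ := by
  simpa only [Finset.mem_Icc, and_imp] using stmt_10_general (s := Finset.Icc 1 n)
    (fun i hi ↦ Nat.cast_pos.2 (Finset.mem_Icc.1 hi).1) Nat.cast_injective.injOn (by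
      simpa only [Finset.mem_Icc, Nat.cast_lt] using fun i hi j hj l hl m hm hij hml ↦
        h i j l m hi.1 hij hj.2 hm.1 hml hl.2)
end

section
/- Let n ≥ 1 and K ≥ 1 be natural numbers and let t, b be real numbers. Suppose there exist integers T and B such that ⌈(i·T − B)/K⌉ = ⌈i·t − b⌉ for all i ∈ {1, …, n}. Then either there exists an integer B' such that ⌈(i·⌊t·K⌋ − B')/K⌉ = ⌈i·t − b⌉ for all i ∈ {1, …, n}, or there exists an integer B' such that ⌈(i·⌈t·K⌉ − B')/K⌉ = ⌈i·t − b⌉ for all i ∈ {1, …, n}. -/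
/-!
Eliminating the intercept, the integers `c i` can be of the form `⌈i * x - b⌉` only if
`(i - j) * x < c i - c j + 1` for all `i` and `j`. For fixed `c`, these conditions cut out an
order-convex set of slopes `x`. Conversely, if such an `x` is a fraction `S / K`, then the integers
`i * S - K * c i` lie within less than `K` of one another, and their maximum is an integer `B` with
`c i = ⌈(i * S - B) / K⌉`. With `c i = ⌈i * t - b⌉`, both `T / K` and `t` satisfy the conditions,
hence so does whichever of `⌊t * K⌋ / K` and `⌈t * K⌉ / K` lies between them.
-/

section CeilSlope

variable {R : Type*} [Field R] [LinearOrder R] {s : Set ℤ} {c : ℤ → ℤ}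

/-- The slope `x` is admissible for the heights `c` on `s` if it satisfies the inequalities that
remain after eliminating the intercept `b` from `⌈i * x - b⌉ = c i`, `i ∈ s`. -/
def IsAdmissibleSlope (s : Set ℤ) (c : ℤ → ℤ) (x : R) : Prop :=
  ∀ i ∈ s, ∀ j ∈ s, ((i : R) - j) * x < c i - c j + 1

variable [IsStrictOrderedRing R]

theorem ordConnected_setOf_isAdmissibleSlope (s : Set ℤ) (c : ℤ → ℤ) :
    {x : R | IsAdmissibleSlope s c x}.OrdConnected := by
  refine ⟨fun x hx z hz y ⟨hxy, hyz⟩ i hi j hj => ?_⟩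
  rcases le_total 0 ((i : R) - j) with hij | hij
  · exact (mul_le_mul_of_nonneg_left hyz hij).trans_lt (hz i hi j hj)
  · exact (mul_le_mul_of_nonpos_left hxy hij).trans_lt (hx i hi j hj)

theorem isAdmissibleSlope_intCast_div_iff {K : ℕ} (hK : 0 < K) {S : ℤ} :
    IsAdmissibleSlope s c ((S : R) / K) ↔
      ∀ i ∈ s, ∀ j ∈ s, i * S - K * c i < j * S - K * c j + K := by
  refine forall₄_congr fun i _ j _ => ?_
  rw [mul_div_assoc', div_lt_iff₀ (Nat.cast_pos.2 hK), ← Int.cast_lt (R := R)]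
  push_cast
  constructor <;> intro h <;> linarith

variable [FloorRing R]

theorem isAdmissibleSlope_of_ceil_eq {x b : R} (h : ∀ i ∈ s, ⌈(i : R) * x - b⌉ = c i) :
    IsAdmissibleSlope s c x := by
  intro i hi j hj
  have hi_le : (i : R) * x - b ≤ c i := (Int.ceil_eq_iff.1 (h i hi)).2
  have hj_lt : (c j : R) - 1 < j * x - b := (Int.ceil_eq_iff.1 (h j hj)).1
  linarith

theorem ceil_intCast_sub_div_eq_iff {K : ℕ} (hK : 0 < K) {a B m : ℤ} :
    ⌈((a : R) - B) / K⌉ = m ↔ a - K * m ≤ B ∧ B < a - K * m + K := by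
  have hK' : (0 : R) < K := Nat.cast_pos.2 hK
  rw [Int.ceil_eq_iff, lt_div_iff₀ hK', div_le_iff₀ hK', ← Int.cast_le (R := R),
    ← Int.cast_lt (R := R)]
  push_cast
  constructor <;> rintro ⟨h₁, h₂⟩ <;> constructor <;> linarith

theorem IsAdmissibleSlope.exists_ceil_eq {K : ℕ} (hK : 0 < K) {S : ℤ}
    (h : IsAdmissibleSlope s c ((S : R) / K)) :
    ∃ B : ℤ, ∀ i ∈ s, ⌈((i : R) * S - B) / K⌉ = c i := by
  rw [isAdmissibleSlope_intCast_div_iff hK] at h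
  let offsets : Set ℤ := (fun i => i * S - K * c i) '' s
  refine ⟨sSup offsets, fun i hi => ?_⟩
  have bddAbove_offsets : BddAbove offsets :=
    ⟨i * S - K * c i + K, Set.forall_mem_image.2 fun j hj => (h j hj i hi).le⟩
  obtain ⟨m, hm, hsup⟩ : sSup offsets ∈ offsets :=
    Int.csSup_mem ⟨_, Set.mem_image_of_mem _ hi⟩ bddAbove_offsets
  rw [← Int.cast_mul, ceil_intCast_sub_div_eq_iff hK]
  exact ⟨le_csSup bddAbove_offsets (Set.mem_image_of_mem _ hi), hsup ▸ h m hm i hi⟩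

theorem stmt_11_general {K : ℕ} (hK : 0 < K) (s : Set ℤ) (t b : R)
    (h : ∃ (T : ℤ) (B : R), ∀ i ∈ s, ⌈((i : R) * T - B) / K⌉ = ⌈(i : R) * t - b⌉) :
    (∃ B' : ℤ, ∀ i ∈ s, ⌈((i : R) * ⌊t * K⌋ - B') / K⌉ = ⌈(i : R) * t - b⌉) ∨
    (∃ B' : ℤ, ∀ i ∈ s, ⌈((i : R) * ⌈t * K⌉ - B') / K⌉ = ⌈(i : R) * t - b⌉) := by
  obtain ⟨T, B, h⟩ := h
  have hK' : (0 : R) < K := Nat.cast_pos.2 hK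
  let c : ℤ → ℤ := fun i => ⌈(i : R) * t - b⌉
  have admissible_t : IsAdmissibleSlope s c t := isAdmissibleSlope_of_ceil_eq fun _ _ => rfl
  have admissible_T : IsAdmissibleSlope s c ((T : R) / K) :=
    isAdmissibleSlope_of_ceil_eq (b := B / K) fun i hi => by
      rw [mul_div_assoc', ← sub_div, h i hi]
  have ordConnected := ordConnected_setOf_isAdmissibleSlope (R := R) s c
  rcases le_total (T : R) (t * K) with hT | hT
  · have T_le_floor : (T : R) ≤ ⌊t * K⌋ := Int.cast_le.2 (Int.le_floor.2 hT)
    exact .inl <| IsAdmissibleSlope.exists_ceil_eq hK <| ordConnected.out admissible_T admissible_t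
      ⟨by gcongr, (div_le_iff₀ hK').2 (Int.floor_le _)⟩
  · have ceil_le_T : (⌈t * K⌉ : R) ≤ T := Int.cast_le.2 (Int.ceil_le.2 hT)
    exact .inr <| IsAdmissibleSlope.exists_ceil_eq hK <| ordConnected.out admissible_t admissible_T
      ⟨(le_div_iff₀ hK').2 (Int.le_ceil _), by gcongr⟩

end CeilSlope

/-- If some `T, B` work, then `T = ⌊t·K⌋` or `T = ⌈t·K⌉` works
with a suitable integer `B'`. -/
theorem stmt_11 (n K : ℕ) (hn : 1 ≤ n) (hK : 1 ≤ K) (t b : ℝ)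
    (h : ∃ T B : ℤ, ∀ i : ℕ, 1 ≤ i → i ≤ n →
      ⌈((i : ℝ) * (T : ℝ) - (B : ℝ)) / (K : ℝ)⌉ = ⌈(i : ℝ) * t - b⌉) :
    (∃ B' : ℤ, ∀ i : ℕ, 1 ≤ i → i ≤ n →
      ⌈((i : ℝ) * ((⌊t * (K : ℝ)⌋ : ℤ) : ℝ) - (B' : ℝ)) / (K : ℝ)⌉ = ⌈(i : ℝ) * t - b⌉) ∨
    (∃ B' : ℤ, ∀ i : ℕ, 1 ≤ i → i ≤ n →
      ⌈((i : ℝ) * ((⌈t * (K : ℝ)⌉ : ℤ) : ℝ) - (B' : ℝ)) / (K : ℝ)⌉ = ⌈(i : ℝ) * t - b⌉) := by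
  obtain ⟨T, B, h⟩ := h
  simpa [Set.forall_mem_image, -Set.mem_image] using
    stmt_11_general hK ((↑) '' Set.Icc 1 n) t b ⟨T, B, Set.forall_mem_image.2 (by simpa using h)⟩
end

section
/- Let n ≥ 2 and K ≥ 1 be natural numbers, let t, b be real numbers, and let T, B be integers such that ⌈(i·T − B)/K⌉ = ⌈i·t − b⌉ for all i ∈ {1, …, n}. Then K·t − 2·K/(n − 1) < T < K·t + 2·K/(n − 1). -/
/-!
The affine functions `x ↦ x * s - c` and `x ↦ x * t - b`, where `s = T / K` and `c = B / K`, have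
equal ceilings at two points, so their difference has absolute value less than `1` at both. That
difference is itself affine, with slope `s - t`; its two values differ by less than `2`, which
bounds the slope.
-/

theorem abs_sub_lt_one_of_ceil_eq_ceil {R : Type*} [Ring R] [LinearOrder R]
    [IsStrictOrderedRing R] [FloorRing R] {a b : R} (h : ⌈a⌉ = ⌈b⌉) : |a - b| < 1 := by
  have hfloor : ⌊-b⌋ = ⌊-a⌋ := by rw [Int.floor_neg, Int.floor_neg, h]
  simpa only [neg_sub_neg] using Int.abs_sub_lt_one_of_floor_eq_floor hfloor

section SlopeBound

variable {k : Type*} [Field k] [LinearOrder k] [IsStrictOrderedRing k] [FloorRing k]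

theorem abs_slope_sub_slope_lt_of_ceil_eq_ceil {x y s c t b : k} (hxy : x < y)
    (hx : ⌈x * s - c⌉ = ⌈x * t - b⌉) (hy : ⌈y * s - c⌉ = ⌈y * t - b⌉) :
    |s - t| < 2 / (y - x) := by
  have hyx : 0 < y - x := sub_pos.mpr hxy
  rw [lt_div_iff₀ hyx]
  calc |s - t| * (y - x) = |(s - t) * (y - x)| := by rw [abs_mul, abs_of_pos hyx]
    _ = |(y * s - c - (y * t - b)) - (x * s - c - (x * t - b))| := by congr 1; ring
    _ ≤ |y * s - c - (y * t - b)| + |x * s - c - (x * t - b)| := abs_sub _ _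
    _ < 1 + 1 := add_lt_add (abs_sub_lt_one_of_ceil_eq_ceil hy) (abs_sub_lt_one_of_ceil_eq_ceil hx)
    _ = 2 := one_add_one_eq_two

theorem stmt_13_general {K x y t b T B : k} (hK : 0 < K) (hxy : x < y)
    (hx : ⌈(x * T - B) / K⌉ = ⌈x * t - b⌉) (hy : ⌈(y * T - B) / K⌉ = ⌈y * t - b⌉) :
    K * t - 2 * K / (y - x) < T ∧ T < K * t + 2 * K / (y - x) := by
  rw [sub_div, mul_div_assoc] at hx hy
  have hslope : |T / K - t| < 2 / (y - x) := abs_slope_sub_slope_lt_of_ceil_eq_ceil hxy hx hy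
  have hT : |T - K * t| < 2 * K / (y - x) :=
    calc |T - K * t| = |K * (T / K - t)| := by rw [mul_sub, mul_div_cancel₀ T hK.ne']
      _ = K * |T / K - t| := by rw [abs_mul, abs_of_pos hK]
      _ < K * (2 / (y - x)) := mul_lt_mul_of_pos_left hslope hK
      _ = 2 * K / (y - x) := by ring
  obtain ⟨hupper, hlower⟩ := abs_sub_lt_iff.mp hT
  exact ⟨sub_lt_comm.mp hlower, sub_lt_iff_lt_add'.mp hupper⟩

end SlopeBound

/-- Range of valid `T`: `Kt − 2K/(n−1) < T < Kt + 2K/(n−1)`. -/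
theorem stmt_13 (n K : ℕ) (hn : 2 ≤ n) (hK : 1 ≤ K) (t b : ℝ) (T B : ℤ)
    (h : ∀ i : ℕ, 1 ≤ i → i ≤ n →
      ⌈((i : ℝ) * (T : ℝ) - (B : ℝ)) / (K : ℝ)⌉ = ⌈(i : ℝ) * t - b⌉) :
    (K : ℝ) * t - 2 * (K : ℝ) / ((n : ℝ) - 1) < (T : ℝ) ∧
    (T : ℝ) < (K : ℝ) * t + 2 * (K : ℝ) / ((n : ℝ) - 1) :=
  stmt_13_general (Nat.cast_pos.mpr hK) (Nat.one_lt_cast.mpr hn)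
    (by simpa only [Nat.cast_one] using h 1 le_rfl (one_le_two.trans hn))
    (h n (one_le_two.trans hn) le_rfl)
end

section
/- Let Y_min and Y_max be integers with Y_min < Y_max, let K be a natural number with K ≥ 1, let t and b be real numbers with t > 0, and let T and B be integers with T > 0. Then the following are equivalent: (i) for every integer N, clip(⌊(N + b)/t⌋, Y_min, Y_max) = clip(⌊(N·K + B)/T⌋, Y_min, Y_max); (ii) for every integer i with Y_min + 1 ≤ i ≤ Y_max, ⌈i·t − b⌉ = ⌈(i·T − B)/K⌉. -/
/-! For positive scales, `N ↦ ⌊(N * k + b) / t⌋` is the upper adjoint of `i ↦ ⌈(i * t - b) / k⌉`: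
the ceiling is the least input at which the quantizer reaches level `i`. Clipping to `[Ymin, Ymax]`
remembers exactly which of the levels `Ymin < i ≤ Ymax` have been reached, so two clipped quantizers
agree iff their thresholds for these levels agree. -/

theorem min_max_eq_min_max_iff_forall_le_iff {α : Type*} [LinearOrder α] {x y a b : α} :
    min (max x a) b = min (max y a) b ↔ ∀ i, a < i → i ≤ b → (i ≤ x ↔ i ≤ y) := by
  constructor
  · intro h i hai hib
    have le_clip_iff (z : α) : i ≤ min (max z a) b ↔ i ≤ z := by
      simp only [le_min_iff, le_max_iff, hai.not_ge, hib, or_false, and_true]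
    rw [← le_clip_iff x, h, le_clip_iff]
  · intro h
    refine eq_of_forall_le_iff fun i => ?_
    simp only [le_min_iff, le_max_iff]
    refine and_congr_left fun hib => ?_
    rcases le_or_gt i a with hia | hai
    · simp only [hia, or_true]
    · rw [h i hai hib]

theorem forall_min_max_eq_iff_of_galoisConnection {α β : Type*} [LinearOrder α] [PartialOrder β]
    {l l' : α → β} {u u' : β → α} (gc : GaloisConnection l u) (gc' : GaloisConnection l' u')
    (a b : α) :
    (∀ n, min (max (u n) a) b = min (max (u' n) a) b) ↔ ∀ i, a < i → i ≤ b → l i = l' i := by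
  simp only [min_max_eq_min_max_iff_forall_le_iff, ← gc.le_iff_le, ← gc'.le_iff_le]
  exact ⟨fun h i hai hib => eq_of_forall_ge_iff fun n => h n i hai hib,
    fun h n i hai hib => by rw [h i hai hib]⟩

section AffineQuantizer

variable {𝕜 : Type*} [Field 𝕜] [LinearOrder 𝕜] [IsStrictOrderedRing 𝕜] [FloorRing 𝕜]

theorem galoisConnection_ceil_floor_affine {k t : 𝕜} (hk : 0 < k) (ht : 0 < t) (b : 𝕜) :
    GaloisConnection (fun i : ℤ => ⌈((i : 𝕜) * t - b) / k⌉)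
      (fun N : ℤ => ⌊((N : 𝕜) * k + b) / t⌋) := by
  intro i N
  rw [Int.le_floor, Int.ceil_le, le_div_iff₀ ht, div_le_iff₀ hk, sub_le_iff_le_add]

theorem stmt_16_general (Ymin Ymax : ℤ) {K t T : 𝕜} (hK : 0 < K) (ht : 0 < t) (hT : 0 < T)
    (b B : 𝕜) :
    (∀ N : ℤ, min (max ⌊((N : 𝕜) + b) / t⌋ Ymin) Ymax
        = min (max ⌊((N : 𝕜) * K + B) / T⌋ Ymin) Ymax) ↔
    (∀ i : ℤ, Ymin + 1 ≤ i → i ≤ Ymax → ⌈(i : 𝕜) * t - b⌉ = ⌈((i : 𝕜) * T - B) / K⌉) := by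
  have gc_unit : GaloisConnection (fun i : ℤ => ⌈(i : 𝕜) * t - b⌉)
      (fun N : ℤ => ⌊((N : 𝕜) + b) / t⌋) := by
    simpa only [mul_one, div_one] using galoisConnection_ceil_floor_affine one_pos ht b
  simp only [Int.add_one_le_iff]
  exact forall_min_max_eq_iff_of_galoisConnection gc_unit
    (galoisConnection_ceil_floor_affine hK hT B) Ymin Ymax

end AffineQuantizer

/-- General quantizer range `[Y_min, Y_max]`: the clipped floor
formulation is equivalent to the ceiling condition for `i ∈ {Y_min+1, …, Y_max}`.
`clip x a b = min (max x a) b`. -/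
theorem stmt_16 (Ymin Ymax : ℤ) (hY : Ymin < Ymax) (K : ℕ) (hK : 1 ≤ K)
    (t b : ℝ) (ht : 0 < t) (T B : ℤ) (hT : 0 < T) :
    (∀ N : ℤ, min (max (⌊((N : ℝ) + b) / t⌋) Ymin) Ymax
        = min (max (⌊((N : ℝ) * (K : ℝ) + (B : ℝ)) / (T : ℝ)⌋) Ymin) Ymax) ↔
    (∀ i : ℤ, Ymin + 1 ≤ i → i ≤ Ymax →
        ⌈(i : ℝ) * t - b⌉ = ⌈((i : ℝ) * (T : ℝ) - (B : ℝ)) / (K : ℝ)⌉) :=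
  stmt_16_general Ymin Ymax (mod_cast hK) ht (mod_cast hT) b B
end

section
/- Let A be a natural number with A ≥ 2 and let t, b be real numbers with t > 0, t − b not an integer, and ⌈t − b⌉ = ⌈A·t − b⌉. Then (A − 1)·t < 1, and for every integer N: if N ≥ ⌈t − b⌉ then clip(⌊(N + b)/t⌋, 0, A) = A, while if N < ⌈t − b⌉ then clip(⌊(N + b)/t⌋, 0, A) = 0. -/
/-! For every integer `k`, the quotient level `⌊(N + b) / t⌋` reaches `k` exactly when
`N ≥ ⌈k t - b⌉`. Hence `⌈t - b⌉ = ⌈A t - b⌉` says that the thresholds of levels `1` and `A`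
coincide: as `N` grows, the level jumps directly from at most `0` to at least `A`, and clipping
leaves only `0` and `A`. -/

theorem sub_lt_one_of_ceil_le_ceil {R : Type*} [Ring R] [LinearOrder R] [IsOrderedRing R]
    [FloorRing R] {x y : R} (h : ⌈y⌉ ≤ ⌈x⌉) : y - x < 1 :=
  sub_left_lt_of_lt_add <| calc
    y ≤ ⌈x⌉ := Int.ceil_le.mp h
    _ < x + 1 := Int.ceil_lt_add_one x

section FloorField

variable {K : Type*} [Field K] [LinearOrder K] [IsOrderedRing K] [FloorRing K] {t b : K}

theorem le_floor_add_div_iff_ceil_mul_sub_le (ht : 0 < t) (k N : ℤ) :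
    k ≤ ⌊((N : K) + b) / t⌋ ↔ ⌈(k : K) * t - b⌉ ≤ N := by
  rw [Int.le_floor, le_div_iff₀ ht, Int.ceil_le, sub_le_iff_le_add]

theorem stmt_17_general (A : ℕ) (ht : 0 < t) (hceil : ⌈(A : K) * t - b⌉ ≤ ⌈t - b⌉) :
    ((A : K) - 1) * t < 1 ∧
    ∀ N : ℤ,
      (⌈t - b⌉ ≤ N → min (max (⌊((N : K) + b) / t⌋) 0) (A : ℤ) = (A : ℤ)) ∧
      (N < ⌈t - b⌉ → min (max (⌊((N : K) + b) / t⌋) 0) (A : ℤ) = 0) := by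
  refine ⟨?_, fun N => ⟨fun hN => ?_, fun hN => ?_⟩⟩
  · calc
      ((A : K) - 1) * t = (A * t - b) - (t - b) := by ring
      _ < 1 := sub_lt_one_of_ceil_le_ceil hceil
  · have level_ge : (A : ℤ) ≤ ⌊((N : K) + b) / t⌋ :=
      (le_floor_add_div_iff_ceil_mul_sub_le ht A N).mpr (by simpa using hceil.trans hN)
    exact min_eq_right (level_ge.trans (le_max_left _ _))
  · have level_lt_one : ⌊((N : K) + b) / t⌋ < 1 :=
      lt_of_not_ge fun h =>
        hN.not_ge (by simpa using (le_floor_add_div_iff_ceil_mul_sub_le ht 1 N).mp h)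
    rw [max_eq_right (Int.lt_add_one_iff.mp level_lt_one), min_eq_left A.cast_nonneg]

end FloorField

/-- If `t > 0`, `t − b` is not an integer and `⌈t−b⌉ = ⌈At−b⌉`
with `A ≥ 2`, then `(A−1)t < 1` and the clipped output is the binary function
`A·sign(N − N₀)` with `N₀ = ⌈t−b⌉ − 1`. -/
theorem stmt_17 (A : ℕ) (hA : 2 ≤ A) (t b : ℝ) (ht : 0 < t)
    (hint : ∀ z : ℤ, t - b ≠ (z : ℝ))
    (hceil : ⌈t - b⌉ = ⌈(A : ℝ) * t - b⌉) :
    ((A : ℝ) - 1) * t < 1 ∧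
    ∀ N : ℤ,
      (⌈t - b⌉ ≤ N → min (max (⌊((N : ℝ) + b) / t⌋) 0) (A : ℤ) = (A : ℤ)) ∧
      (N < ⌈t - b⌉ → min (max (⌊((N : ℝ) + b) / t⌋) 0) (A : ℤ) = 0) :=
  stmt_17_general A ht hceil.ge
end

section
/- Let n be a natural number with n > 4, let t and b be real numbers with 0 ≤ t < 1 and ⌈t − b⌉ = 1, and set Sᵢ = ⌈i·t − b⌉ for i ∈ {1, …, n}. Then for all i, j, l, m ∈ {1, …, n} with i > j and l > m, (S_l − S_m + 1)/(l − m) − (Sᵢ − Sⱼ − 1)/(i − j) ≥ 2/((n − 1)·(n − 3)). -/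
/-!
Write `U = S l - S m + 1`, `q = l - m`, `L = S i - S j - 1`, `r = i - j`. Since `k * t - b ≤ S k`
and `S k < k * t - b + 1`, the slope `t` lies strictly between `L / r` and `U / q`, so the integer
`D = U * r - L * q` is positive, and `U / q - L / r = D / (q * r)`. With `N = n - 1` the claim
becomes `2 * (q * r) ≤ D * (N * (N - 2))`.

If the intervals `[m, l]` and `[j, i]` do not overlap, then `q + r ≤ N`, and AM-GM with `1 ≤ D`
suffices. If they overlap, then comparing `D` with the same quantity for subintervals gives `2 ≤ D`,
which suffices as soon as the shorter interval has length at most `N - 2`. What is left are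
intervals of equal length and nested intervals with a common endpoint, and there `D` is at least
the length of the shorter one.
-/

section Arithmetic

variable {R : Type*} [CommRing R] [LinearOrder R] [IsStrictOrderedRing R] {D q r N : R}

theorem two_mul_mul_le_of_add_le (hN : 4 ≤ N) (hD : 1 ≤ D) (hqr : 0 ≤ q + r) (h : q + r ≤ N) :
    2 * (q * r) ≤ D * (N * (N - 2)) := by
  have amgm : 4 * (q * r) ≤ (q + r) ^ 2 := by linarith [sq_nonneg (q - r)]
  have sum_sq : (q + r) ^ 2 ≤ N ^ 2 := by gcongr
  have sq_le : N ^ 2 ≤ 2 * (N * (N - 2)) := by nlinarith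
  have le_mul : N * (N - 2) ≤ D * (N * (N - 2)) :=
    le_mul_of_one_le_left (mul_nonneg (by linarith) (by linarith)) hD
  linarith

theorem two_mul_mul_le_of_two_le (hD : 2 ≤ D) (hq : 0 ≤ q) (hr : 0 ≤ r) (hqN : q ≤ N - 2)
    (hrN : r ≤ N) : 2 * (q * r) ≤ D * (N * (N - 2)) := by
  rw [mul_comm q r]
  exact mul_le_mul hD (mul_le_mul hrN hqN hq (hr.trans hrN)) (mul_nonneg hr hq)
    (zero_le_two.trans hD)

theorem two_mul_mul_le_of_le (hN : 4 ≤ N) (hq : 0 ≤ q) (hr : 0 ≤ r) (hqD : q ≤ D) (hrN : r ≤ N) :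
    2 * (q * r) ≤ D * (N * (N - 2)) := by
  have two_mul_le : 2 * r ≤ N * (N - 2) := by nlinarith
  calc
    2 * (q * r) = q * (2 * r) := mul_left_comm 2 q r
    _ ≤ D * (N * (N - 2)) :=
      mul_le_mul hqD two_mul_le (mul_nonneg zero_le_two hr) (hq.trans hqD)

end Arithmetic

/-- The numerator, over the common denominator `(l - m) * (i - j)`, of the difference between the
upper slope `(S l - S m + 1) / (l - m)` of `S` on `[m, l]` and its lower slope
`(S i - S j - 1) / (i - j)` on `[j, i]`. -/
def slopeGap (S : ℤ → ℤ) (m l j i : ℤ) : ℤ :=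
  (S l - S m + 1) * (i - j) - (S i - S j - 1) * (l - m)

/-- Every upper slope of `S` exceeds every lower slope of `S`. In cross-multiplied form one of the
two intervals may degenerate to a point, with upper slope `1 / 0 = +∞` or lower slope
`-1 / 0 = -∞`. -/
def SlopeSeparated (S : ℤ → ℤ) : Prop :=
  ∀ ⦃m l j i : ℤ⦄, m ≤ l → j ≤ i → m < l ∨ j < i → 0 < slopeGap S m l j i

section SlopeGap

variable (S : ℤ → ℤ) (m l j i : ℤ)

theorem slopeGap_neg : slopeGap (-S) j i m l = slopeGap S m l j i := by
  simp only [slopeGap, Pi.neg_apply]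
  ring

theorem slopeGap_self_left : slopeGap S m m j i = i - j := by
  simp [slopeGap]

theorem slopeGap_eq_add : slopeGap S m l j i = slopeGap S m j j i + slopeGap S i l j i := by
  simp only [slopeGap]
  ring

theorem mul_slopeGap_eq_add :
    (i - m) * slopeGap S m l j i =
      (l - m) * slopeGap S m j j i + (i - j) * slopeGap S m l l i := by
  simp only [slopeGap]
  ring

theorem upper_slope_sub_lower_slope {K : Type*} [Field K] [CharZero K] {m l j i : ℤ}
    (hml : m ≠ l) (hji : j ≠ i) :
    ((S l : K) - S m + 1) / (l - m) - ((S i : K) - S j - 1) / (i - j) =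
      slopeGap S m l j i / ((l - m) * (i - j)) := by
  have hq : (l : K) - m ≠ 0 := sub_ne_zero.2 (Int.cast_injective.ne hml.symm)
  have hr : (i : K) - j ≠ 0 := sub_ne_zero.2 (Int.cast_injective.ne hji.symm)
  rw [div_sub_div _ _ hq hr, slopeGap]
  push_cast
  ring

end SlopeGap

namespace SlopeSeparated

variable {S : ℤ → ℤ} {m l j i N : ℤ}

theorem neg (hS : SlopeSeparated S) : SlopeSeparated (-S) := fun m l j i hml hji h ↦ by
  rw [slopeGap_neg]
  exact hS hji hml h.symm

theorem two_le_slopeGap_of_nested (hS : SlopeSeparated S) (hmj : m ≤ j) (hji : j < i)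
    (hil : i ≤ l) : 2 ≤ slopeGap S m l j i := by
  have left_pos : 0 < slopeGap S m j j i := hS hmj hji.le (.inr hji)
  have right_pos : 0 < slopeGap S i l j i := hS hil hji.le (.inr hji)
  rw [slopeGap_eq_add]
  omega

theorem length_le_slopeGap_of_nested (hS : SlopeSeparated S) (hmj : m ≤ j) (hji : j < i)
    (hil : i ≤ l) (h : m = j ∨ i = l) : i - j ≤ slopeGap S m l j i := by
  have left_pos : 0 < slopeGap S m j j i := hS hmj hji.le (.inr hji)
  have right_pos : 0 < slopeGap S i l j i := hS hil hji.le (.inr hji)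
  rw [slopeGap_eq_add]
  rcases h with rfl | rfl <;> rw [slopeGap_self_left] <;> omega

-- The weights in `mul_slopeGap_eq_add` satisfy `(l - m) + (i - j) > i - m` because of the overlap.
theorem two_le_slopeGap_of_crossing (hS : SlopeSeparated S) (hmj : m ≤ j) (hjl : j < l)
    (hli : l ≤ i) : 2 ≤ slopeGap S m l j i := by
  have left_pos : 1 ≤ slopeGap S m j j i := hS hmj (by omega) (.inr (by omega))
  have right_pos : 1 ≤ slopeGap S m l l i := hS (by omega) hli (.inl (by omega))
  suffices (i - m) * 1 < (i - m) * slopeGap S m l j i from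
    lt_of_mul_lt_mul_left this (by omega)
  calc
    (i - m) * 1 < (l - m) * 1 + (i - j) * 1 := by omega
    _ ≤ (l - m) * slopeGap S m j j i + (i - j) * slopeGap S m l l i := by
      gcongr <;> omega
    _ = (i - m) * slopeGap S m l j i := (mul_slopeGap_eq_add S m l j i).symm

theorem length_le_slopeGap_of_length_eq (hS : SlopeSeparated S) (hji : j < i)
    (h : l - m = i - j) : i - j ≤ slopeGap S m l j i := by
  have length_dvd : i - j ∣ slopeGap S m l j i := by
    rw [slopeGap, h]
    exact dvd_sub (dvd_mul_left _ _) (dvd_mul_left _ _)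
  exact Int.le_of_dvd (hS (by omega) hji.le (.inr hji)) length_dvd

theorem two_mul_mul_le_slopeGap_of_nested (hS : SlopeSeparated S) (hN : 4 ≤ N) (hmj : m ≤ j)
    (hji : j < i) (hil : i ≤ l) (hlm : l - m ≤ N) :
    2 * ((l - m) * (i - j)) ≤ slopeGap S m l j i * (N * (N - 2)) := by
  rw [mul_comm (l - m)]
  by_cases h : m = j ∨ i = l
  · exact two_mul_mul_le_of_le hN (by omega) (by omega)
      (hS.length_le_slopeGap_of_nested hmj hji hil h) hlm
  · exact two_mul_mul_le_of_two_le (hS.two_le_slopeGap_of_nested hmj hji hil)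
      (by omega) (by omega) (by omega) hlm

theorem two_mul_mul_le_slopeGap_of_crossing (hS : SlopeSeparated S) (hN : 4 ≤ N) (hmj : m < j)
    (hjl : j < l) (hli : l < i) (him : i - m ≤ N) :
    2 * ((l - m) * (i - j)) ≤ slopeGap S m l j i * (N * (N - 2)) := by
  have two_le : 2 ≤ slopeGap S m l j i := hS.two_le_slopeGap_of_crossing hmj.le hjl hli.le
  rcases lt_trichotomy (l - m) (i - j) with hlt | heq | hgt
  · exact two_mul_mul_le_of_two_le two_le (by omega) (by omega) (by omega) (by omega)
  · have length_le := hS.length_le_slopeGap_of_length_eq (by omega) heq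
    exact two_mul_mul_le_of_le hN (by omega) (by omega) (heq.trans_le length_le) (by omega)
  · rw [mul_comm (l - m)]
    exact two_mul_mul_le_of_two_le two_le (by omega) (by omega) (by omega) (by omega)

theorem two_mul_mul_le_slopeGap_of_left_le (hS : SlopeSeparated S) (hN : 4 ≤ N) (hml : m < l)
    (hji : j < i) (hmj : m ≤ j) (hlm : l - m ≤ N) (him : i - m ≤ N) :
    2 * ((l - m) * (i - j)) ≤ slopeGap S m l j i * (N * (N - 2)) := by
  have gap_pos : 0 < slopeGap S m l j i := hS hml.le hji.le (.inl hml)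
  rcases le_or_gt l j with disjoint | hjl
  · exact two_mul_mul_le_of_add_le hN gap_pos (by omega) (by omega)
  rcases le_or_gt i l with hil | hli
  · exact hS.two_mul_mul_le_slopeGap_of_nested hN hmj hji hil hlm
  rcases hmj.eq_or_lt with rfl | hmj
  · rw [← slopeGap_neg, mul_comm (l - m)]
    exact hS.neg.two_mul_mul_le_slopeGap_of_nested hN le_rfl hml hli.le him
  · exact hS.two_mul_mul_le_slopeGap_of_crossing hN hmj hjl hli him

theorem two_mul_mul_le_slopeGap (hS : SlopeSeparated S) (hN : 4 ≤ N) (hml : m < l) (hji : j < i)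
    (hlm : l - m ≤ N) (him : i - m ≤ N) (hlj : l - j ≤ N) (hij : i - j ≤ N) :
    2 * ((l - m) * (i - j)) ≤ slopeGap S m l j i * (N * (N - 2)) := by
  rcases le_total m j with hmj | hjm
  · exact hS.two_mul_mul_le_slopeGap_of_left_le hN hml hji hmj hlm him
  · rw [← slopeGap_neg, mul_comm (l - m)]
    exact hS.neg.two_mul_mul_le_slopeGap_of_left_le hN hji hml hjm hij hlj

end SlopeSeparated

section OrderedField

variable {K : Type*} [Field K] [LinearOrder K] [IsStrictOrderedRing K]

theorem SlopeSeparated.two_div_le_upper_slope_sub_lower_slope {S : ℤ → ℤ} {m l j i N : ℤ}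
    (hS : SlopeSeparated S) (hN : 4 ≤ N) (hml : m < l) (hji : j < i)
    (hlm : l - m ≤ N) (him : i - m ≤ N) (hlj : l - j ≤ N) (hij : i - j ≤ N) :
    2 / ((N : K) * (N - 2)) ≤
      ((S l : K) - S m + 1) / (l - m) - ((S i : K) - S j - 1) / (i - j) := by
  have hq : (0 : K) < l - m := sub_pos.2 (Int.cast_lt.2 hml)
  have hr : (0 : K) < i - j := sub_pos.2 (Int.cast_lt.2 hji)
  have hN' : (4 : K) ≤ N := by exact_mod_cast hN
  have hden : (0 : K) < N * (N - 2) := mul_pos (by linarith) (by linarith)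
  rw [upper_slope_sub_lower_slope S hml.ne hji.ne, div_le_div_iff₀ hden (mul_pos hq hr)]
  exact_mod_cast hS.two_mul_mul_le_slopeGap hN hml hji hlm him hlj hij

theorem slopeSeparated_of_sub_mul_lt {S : ℤ → ℤ} {t : K}
    (h : ∀ x y : ℤ, ((y : K) - x) * t < S y - S x + 1) : SlopeSeparated S := by
  intro m l j i hml hji hlt
  have upper : 0 < (S l : K) - S m + 1 - (l - m) * t := sub_pos.2 (h m l)
  have lower : 0 < ((i : K) - j) * t - (S i - S j - 1) := by linarith [h i j]
  have hq : (0 : K) ≤ l - m := sub_nonneg.2 (Int.cast_le.2 hml)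
  have hr : (0 : K) ≤ i - j := sub_nonneg.2 (Int.cast_le.2 hji)
  have gap_eq : (slopeGap S m l j i : K) =
      (S l - S m + 1 - (l - m) * t) * (i - j) + ((i - j) * t - (S i - S j - 1)) * (l - m) := by
    rw [slopeGap]
    push_cast
    ring
  have gap_pos : (0 : K) < slopeGap S m l j i := by
    rw [gap_eq]
    rcases hlt with hml_lt | hji_lt
    · have hq_pos : (0 : K) < l - m := sub_pos.2 (Int.cast_lt.2 hml_lt)
      exact add_pos_of_nonneg_of_pos (mul_nonneg upper.le hr) (mul_pos lower hq_pos)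
    · have hr_pos : (0 : K) < i - j := sub_pos.2 (Int.cast_lt.2 hji_lt)
      exact add_pos_of_pos_of_nonneg (mul_pos upper hr_pos) (mul_nonneg lower.le hq)
  exact_mod_cast gap_pos

variable [FloorRing K]

theorem slopeSeparated_ceil (t b : K) : SlopeSeparated fun k ↦ ⌈(k : K) * t - b⌉ :=
  slopeSeparated_of_sub_mul_lt (t := t) fun x y ↦ by
    linarith [Int.le_ceil ((y : K) * t - b), Int.ceil_lt_add_one ((x : K) * t - b)]

theorem stmt_18_general (n : ℕ) (hn : 4 < n) (t b : K)
    (S : ℕ → ℤ) (hS : ∀ i : ℕ, 1 ≤ i → i ≤ n → S i = ⌈(i : K) * t - b⌉) :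
    ∀ i j l m : ℕ, 1 ≤ j → j < i → i ≤ n → 1 ≤ m → m < l → l ≤ n →
      2 / (((n : K) - 1) * ((n : K) - 3)) ≤
        ((S l : K) - (S m : K) + 1) / ((l : K) - (m : K)) -
        ((S i : K) - (S j : K) - 1) / ((i : K) - (j : K)) := by
  intro i j l m hj hji hi hm hml hl
  have slope_bound := (slopeSeparated_ceil t b).two_div_le_upper_slope_sub_lower_slope (K := K)
    (m := m) (l := l) (j := j) (i := i) (N := n - 1)
    (by omega) (by omega) (by omega) (by omega) (by omega) (by omega) (by omega)
  have three_eq : (n : K) - 3 = n - 1 - 2 := by ring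
  rw [hS i (by omega) hi, hS j hj (by omega), hS l (by omega) hl, hS m hm (by omega), three_eq]
  simpa only [Int.cast_natCast, Int.cast_sub, Int.cast_one] using slope_bound

end OrderedField


/-- For `n > 4`, `0 ≤ t < 1`, `⌈t−b⌉ = 1` and `Sᵢ = ⌈i·t − b⌉`,
for all `i > j`, `l > m` in `{1, …, n}`:
`(S_l − S_m + 1)/(l−m) − (Sᵢ − Sⱼ − 1)/(i−j) ≥ 2/((n−1)(n−3))`. -/
theorem stmt_18 (n : ℕ) (hn : 4 < n) (t b : ℝ) (ht0 : 0 ≤ t) (ht1 : t < 1)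
    (htb : ⌈t - b⌉ = 1)
    (S : ℕ → ℤ) (hS : ∀ i : ℕ, 1 ≤ i → i ≤ n → S i = ⌈(i : ℝ) * t - b⌉) :
    ∀ i j l m : ℕ, 1 ≤ j → j < i → i ≤ n → 1 ≤ m → m < l → l ≤ n →
      2 / (((n : ℝ) - 1) * ((n : ℝ) - 3)) ≤
        ((S l : ℝ) - (S m : ℝ) + 1) / ((l : ℝ) - (m : ℝ)) -
        ((S i : ℝ) - (S j : ℝ) - 1) / ((i : ℝ) - (j : ℝ)) :=
  stmt_18_general n hn t b S hS
end
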